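/- Let (Ω, 𝒜, μ) be a σ-finite measure space and T₁,…,T_d a commuting family of positive Dunford–Schwartz operators. Then for every f ∈ L¹(μ) and every sequence n(k) ∈ ℕ^d with n(k) → ∞ that remains in a sector of ℕ^d, the averages A_{n(k)}(f) converge almost uniformly as k → ∞ to some f̂ ∈ L¹(μ). -/

import Mathlib

open MeasureTheory Filter Set ENNReal Topology

variable {Ω : Type*} [MeasurableSpace Ω]

/-- `f` belongs to `L¹(μ) + L^∞(μ)`. -/
def MemL1pLinf (μ : Measure Ω) (f : Ω →ₘ[μ] ℝ) : Prop :=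
  ∃ g h : Ω →ₘ[μ] ℝ, eLpNorm g 1 μ ≠ ∞ ∧ eLpNorm h ⊤ μ ≠ ∞ ∧ f = g + h

/-- A positive Dunford–Schwartz operator: linear and positive on `L¹+L^∞`,
contracting both the `L¹`- and `L^∞`-norms. -/
structure IsPosDS (μ : Measure Ω) (T : (Ω →ₘ[μ] ℝ) → (Ω →ₘ[μ] ℝ)) : Prop where
  map_add : ∀ f g, MemL1pLinf μ f → MemL1pLinf μ g → T (f + g) = T f + T g
  map_smul : ∀ (c : ℝ) (f), MemL1pLinf μ f → T (c • f) = c • T f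
  map_pos : ∀ f, MemL1pLinf μ f → 0 ≤ f → 0 ≤ T f
  norm_one : ∀ f, MemL1pLinf μ f → eLpNorm (T f) 1 μ ≤ eLpNorm f 1 μ
  norm_top : ∀ f, MemL1pLinf μ f → eLpNorm (T f) ⊤ μ ≤ eLpNorm f ⊤ μ

/-- The Cesàro averages `A_n(f) = (1/n) ∑_{k<n} T^k f`. -/
noncomputable def cesaro (μ : Measure Ω) (T : (Ω →ₘ[μ] ℝ) → (Ω →ₘ[μ] ℝ)) (n : ℕ)
    (f : Ω →ₘ[μ] ℝ) : Ω →ₘ[μ] ℝ :=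
  (n : ℝ)⁻¹ • ∑ k ∈ Finset.range n, T^[k] f

/-- Almost uniform convergence of a net `F` to `f`. -/
def AuTendsto {ι : Type*} (μ : Measure Ω) (l : Filter ι) (F : ι → Ω →ₘ[μ] ℝ)
    (f : Ω →ₘ[μ] ℝ) : Prop :=
  ∀ ε : ℝ, 0 < ε → ∃ E : Set Ω, MeasurableSet E ∧ μ Eᶜ ≤ ENNReal.ofReal ε ∧
    Tendsto (fun i => eLpNorm (E.indicator (⇑(F i - f))) ⊤ μ) l (𝓝 0)

/-- `R_μ`: elements of `L¹+L^∞` whose distribution tails are finite. -/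
def MemRmu (μ : Measure Ω) (f : Ω →ₘ[μ] ℝ) : Prop :=
  MemL1pLinf μ f ∧ ∀ lam : ℝ, 0 < lam → μ {ω | lam < |f ω|} < ∞

/-- `T₁^{k₁} ∘ ⋯ ∘ T_d^{k_d}` for a family `T` of operators. -/
def iterComp {E : Type*} {d : ℕ} (T : Fin d → E → E) (k : Fin d → ℕ) : E → E :=
  (List.ofFn fun i => (T i)^[k i]).foldr (· ∘ ·) id

/-- The multiparameter averages
`A_n(f) = (n₁⋯n_d)⁻¹ ∑_{i₁<n₁} ⋯ ∑_{i_d<n_d} T₁^{i₁}⋯T_d^{i_d} f`. -/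
noncomputable def multiAvg (μ : Measure Ω) {d : ℕ}
    (T : Fin d → (Ω →ₘ[μ] ℝ) → (Ω →ₘ[μ] ℝ)) (n : Fin d → ℕ)
    (f : Ω →ₘ[μ] ℝ) : Ω →ₘ[μ] ℝ :=
  (∏ i, (n i : ℝ))⁻¹ •
    ∑ k ∈ Fintype.piFinset (fun i => Finset.range (n i)), iterComp T k f

/-- A sequence `n(k) ∈ ℕ^d` remains in a sector of `ℕ^d`. -/
def InSector {d : ℕ} (n : ℕ → Fin d → ℕ) : Prop :=
  ∃ c₀ : ℝ, ∀ k, ∀ i j, n k j ≠ 0 → (n k i : ℝ) / (n k j : ℝ) ≤ c₀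

/-! Let `D` be a closed convex commutative monoid of positive contractions of `L¹` containing the
`T i`. Brunel's transform `ψ(a) = (1 - √(1 - a)) / a` maps `D` to itself, and the hitting
probabilities of the simple random walk give `A_{N²}(a) A_{N²}(b) ≤ c A_N(ψ(a) ψ(b))`. Iterating,
the averages `A_n(T)` over a sector are dominated by a constant times ordinary Cesàro means of a
single `u ∈ D`, so Hopf's maximal ergodic theorem for `u` yields a weak type `(1, 1)` bound for
`sup_k |A_{n(k)} f|`.

By truncation the maximal function is also continuous in measure at `0` on `L²`. There, common fixed
points and coboundaries `f - T i f` of bounded functions span a dense subspace on which almost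
uniform convergence is evident, and Banach's principle extends it to all of `L²`. The space `L¹`
then follows by the same principle, since indicator functions span a dense subspace of `L¹`
contained in `L²`. -/

/-- The probability that a simple random walk on `ℤ` first hits `-j` at time `2 k + j`, namely
`j / (2 k + j) * choose (2 k + j) k * 2 ^ (-2 k - j)`. Equivalently, `passageProb j k` is the
coefficient of `z ^ k` in `ψ ^ j`, where `ψ = (1 + z ψ ^ 2) / 2`. It is written as a product of
successive ratios so that `j = 0` is not exceptional. -/
noncomputable def passageProb (j k : ℕ) : ℝ :=
  (1 / 2) ^ j * ∏ i ∈ Finset.range k,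
    ((2 * i + j) * (2 * i + j + 1) / (4 * (i + 1) * (i + j + 1)) : ℝ)

namespace passageProb

theorem zero_right (j : ℕ) : passageProb j 0 = (1 / 2) ^ j := by simp [passageProb]

theorem succ_right (j k : ℕ) : passageProb j (k + 1) =
    passageProb j k * ((2 * k + j) * (2 * k + j + 1) / (4 * (k + 1) * (k + j + 1))) := by
  rw [passageProb, passageProb, Finset.prod_range_succ, ← mul_assoc]

theorem nonneg (j k : ℕ) : 0 ≤ passageProb j k := by
  unfold passageProb; positivity

theorem zero_succ (k : ℕ) : passageProb 0 (k + 1) = 0 := by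
  simp [passageProb, Finset.prod_range_succ']

theorem succ_left (j k : ℕ) : passageProb (j + 2) k =
    passageProb (j + 1) k * ((j + 2) * (2 * k + j + 1) / ((j + 1) * (2 * (k + j + 2)))) := by
  induction k with
  | zero =>
    rw [zero_right, zero_right, pow_succ _ (j + 1)]
    push_cast
    field_simp
    ring
  | succ k ih =>
    rw [succ_right, succ_right, ih]
    push_cast
    field_simp
    ring

theorem succ_succ (j k : ℕ) : passageProb (j + 1) (k + 1) =
    1 / 2 * (passageProb j (k + 1) + passageProb (j + 2) k) := by
  cases j with
  | zero =>
    rw [zero_succ, succ_left, succ_right]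
    push_cast
    field_simp
    ring
  | succ j =>
    rw [succ_left (j + 1), succ_left, succ_left, succ_right]
    push_cast
    field_simp
    ring

theorem one_eq_catalan_div (k : ℕ) : passageProb 1 k = catalan k / 2 ^ (2 * k + 1) := by
  induction k with
  | zero => simp [zero_right]
  | succ k ih =>
    have catalan_succ_ratio : ((k : ℝ) + 2) * catalan (k + 1) = 2 * (2 * k + 1) * catalan k := by
      have hk : (k + 2) * catalan (k + 1) = (k + 1).centralBinom :=
        succ_mul_catalan_eq_centralBinom (k + 1)
      have key : (k + 1) * ((k + 2) * catalan (k + 1)) =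
          (k + 1) * (2 * (2 * k + 1) * catalan k) := by
        rw [hk, Nat.succ_mul_centralBinom_succ, ← succ_mul_catalan_eq_centralBinom]
        ring
      exact_mod_cast Nat.eq_of_mul_eq_mul_left k.succ_pos key
    rw [succ_right, ih, ← mul_right_inj' (by positivity : (k : ℝ) + 2 ≠ 0),
      ← mul_div_assoc _ (catalan (k + 1) : ℝ), catalan_succ_ratio]
    push_cast
    field_simp
    ring

theorem one_succ_eq_sum_antidiagonal (k : ℕ) : passageProb 1 (k + 1) =
    1 / 2 * ∑ ij ∈ Finset.HasAntidiagonal.antidiagonal k,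
      passageProb 1 ij.1 * passageProb 1 ij.2 := by
  simp only [one_eq_catalan_div, catalan_succ']
  push_cast
  rw [Finset.sum_div, Finset.mul_sum]
  refine Finset.sum_congr rfl fun ij hij => ?_
  rw [← Finset.HasAntidiagonal.mem_antidiagonal.1 hij]
  field_simp
  ring

theorem sum_range_one (n : ℕ) :
    ∑ k ∈ Finset.range n, passageProb 1 k = 1 - 2 * (n + 1) * passageProb 1 n := by
  induction n with
  | zero => simp [zero_right]
  | succ n ih =>
    rw [Finset.sum_range_succ, ih, succ_right]
    push_cast
    field_simp
    ring

theorem sum_range_one_le_one (n : ℕ) : ∑ k ∈ Finset.range n, passageProb 1 k ≤ 1 := by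
  have := nonneg 1 n
  rw [sum_range_one, sub_le_self_iff]
  positivity

theorem summable_one : Summable (passageProb 1) :=
  summable_of_sum_range_le (nonneg 1) sum_range_one_le_one

theorem one_div_sixteen_le_sq_mul (k : ℕ) :
    1 / 16 ≤ passageProb 1 (k + 1) ^ 2 * ((k + 1) * (k + 2) ^ 2) := by
  induction k with
  | zero => norm_num [succ_right, zero_right]
  | succ k ih =>
    refine ih.trans ?_
    rw [succ_right 1 (k + 1), mul_pow, mul_assoc]
    refine mul_le_mul_of_nonneg_left ?_ (sq_nonneg _)
    push_cast
    rw [div_pow, div_mul_eq_mul_div, le_div_iff₀ (by positivity), ← sub_nonneg]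
    ring_nf
    positivity

theorem one_div_four_le_one_mul_cube {k : ℕ} {r : ℝ} (hr : 0 ≤ r) (hk : (k : ℝ) + 1 ≤ r ^ 2) :
    1 / 4 ≤ passageProb 1 k * r ^ 3 := by
  have hsq : 1 / 16 ≤ passageProb 1 k ^ 2 * ((k : ℝ) + 1) ^ 3 := by
    cases k with
    | zero => norm_num [zero_right]
    | succ k =>
      refine (one_div_sixteen_le_sq_mul k).trans ?_
      push_cast
      gcongr ?_ * ?_
      nlinarith [(k.cast_nonneg : (0 : ℝ) ≤ k)]
  refine le_of_sq_le_sq ?_ (by have := nonneg 1 k; positivity)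
  calc (1 / 4 : ℝ) ^ 2 = 1 / 16 := by norm_num
    _ ≤ passageProb 1 k ^ 2 * ((k : ℝ) + 1) ^ 3 := hsq
    _ ≤ passageProb 1 k ^ 2 * (r ^ 2) ^ 3 := by gcongr
    _ = (passageProb 1 k * r ^ 3) ^ 2 := by ring

theorem one_mul_sub_le (j k : ℕ) :
    (j + 1) * passageProb 1 k * (1 - j * (j + 5) / (4 * (k + 2))) ≤ passageProb (j + 1) k := by
  have h₁ := nonneg 1 k
  induction j with
  | zero => simp
  | succ j ih =>
    set x : ℝ := j * (j + 5) / (4 * (k + 2))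
    set y : ℝ := (j + 3) / (2 * (k + j + 2))
    have hx : 0 ≤ x := by positivity
    have hy₀ : 0 ≤ y := by positivity
    have hy₁ : y ≤ 1 := by
      rw [div_le_one (by positivity)]
      linarith [(k.cast_nonneg : (0 : ℝ) ≤ k), (j.cast_nonneg : (0 : ℝ) ≤ j)]
    have hxy : 1 - ((j : ℝ) + 1) * (j + 1 + 5) / (4 * (k + 2)) ≤ (1 - x) * (1 - y) := by
      have hy : y ≤ (j + 3) / (2 * (k + 2)) := by
        unfold y; gcongr; linarith [(j.cast_nonneg : (0 : ℝ) ≤ j)]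
      have : ((j : ℝ) + 1) * (j + 1 + 5) / (4 * (k + 2)) = x + (j + 3) / (2 * (k + 2)) := by
        unfold x; field_simp; ring
      nlinarith [mul_nonneg hx hy₀]
    have hstep : passageProb (j + 2) k = passageProb (j + 1) k * ((j + 2) / (j + 1) * (1 - y)) := by
      rw [succ_left]
      congr 1
      unfold y
      field_simp
      ring
    push_cast
    calc ((j : ℝ) + 1 + 1) * passageProb 1 k * (1 - (j + 1) * (j + 1 + 5) / (4 * (k + 2)))
        ≤ (j + 1 + 1) * passageProb 1 k * ((1 - x) * (1 - y)) := by gcongr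
      _ = (j + 1) * passageProb 1 k * (1 - x) * ((j + 2) / (j + 1) * (1 - y)) := by
          field_simp; ring
      _ ≤ passageProb (j + 1) k * ((j + 2) / (j + 1) * (1 - y)) := by
          have : 0 ≤ 1 - y := by linarith
          gcongr
      _ = passageProb (j + 2) k := hstep.symm

theorem two_fifths_mul_one_le {j k : ℕ} (hjk : j ^ 2 ≤ k) :
    2 / 5 * ((j + 1) * passageProb 1 k) ≤ passageProb (j + 1) k := by
  have hfactor : (2 / 5 : ℝ) ≤ 1 - j * (j + 5) / (4 * (k + 2)) := by
    have hjk' : (j : ℝ) ^ 2 ≤ k := by exact_mod_cast hjk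
    rw [le_sub_comm, div_le_iff₀ (by positivity)]
    nlinarith [sq_nonneg ((j : ℝ) - 9 / 5)]
  have := nonneg 1 k
  calc 2 / 5 * ((j + 1) * passageProb 1 k)
      ≤ (1 - j * (j + 5) / (4 * (k + 2))) * ((j + 1) * passageProb 1 k) := by gcongr
    _ ≤ passageProb (j + 1) k := by rw [mul_comm]; exact one_mul_sub_le j k

theorem cube_div_le_sum_mul {J k l : ℕ} (hk : ∀ j < J, j ^ 2 ≤ k) (hl : ∀ j < J, j ^ 2 ≤ l) :
    4 / 75 * (J : ℝ) ^ 3 * (passageProb 1 k * passageProb 1 l) ≤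
      ∑ j ∈ Finset.range J, passageProb (j + 1) k * passageProb (j + 1) l := by
  have sum_sq : ∀ J : ℕ, (J : ℝ) ^ 3 / 3 ≤ ∑ j ∈ Finset.range J, ((j : ℝ) + 1) ^ 2 := by
    intro J
    induction J with
    | zero => simp
    | succ J ih =>
      rw [Finset.sum_range_succ]
      push_cast
      nlinarith [(J.cast_nonneg : (0 : ℝ) ≤ J)]
  have hpk := nonneg 1 k
  have hpl := nonneg 1 l
  calc 4 / 75 * (J : ℝ) ^ 3 * (passageProb 1 k * passageProb 1 l)
      = J ^ 3 / 3 * (4 / 25 * (passageProb 1 k * passageProb 1 l)) := by ring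
    _ ≤ (∑ j ∈ Finset.range J, ((j : ℝ) + 1) ^ 2) *
          (4 / 25 * (passageProb 1 k * passageProb 1 l)) := by gcongr; exact sum_sq J
    _ = ∑ j ∈ Finset.range J, 2 / 5 * ((j + 1) * passageProb 1 k) *
          (2 / 5 * ((j + 1) * passageProb 1 l)) := by
        rw [Finset.sum_mul]; exact Finset.sum_congr rfl fun j _ => by ring
    _ ≤ ∑ j ∈ Finset.range J, passageProb (j + 1) k * passageProb (j + 1) l := by
        refine Finset.sum_le_sum fun j hj => ?_
        rw [Finset.mem_range] at hj
        exact mul_le_mul (two_fifths_mul_one_le (hk j hj)) (two_fifths_mul_one_le (hl j hj))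
          (by positivity) (nonneg _ _)

theorem le_sum_mul_of_le {N k l : ℕ} (hN : 2 ≤ N) (hk : k < N ^ 2) (hlk : l ≤ k) :
    1 / (2400 * (N : ℝ) ^ 3) ≤ ∑ j ∈ Finset.range N, passageProb j k * passageProb j l := by
  set J := max 1 l.sqrt
  have hJN : J + 1 ≤ N := by
    have : l.sqrt < N := Nat.sqrt_lt'.2 (hlk.trans_lt hk)
    omega
  have hJl : ∀ j < J, j ^ 2 ≤ l := fun j hj => by
    rcases lt_max_iff.1 hj with h | h
    · simp [Nat.lt_one_iff.1 h]
    · exact Nat.le_sqrt'.1 h.le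
  have hlJ : (l : ℝ) + 1 ≤ (2 * J) ^ 2 := by
    have : l + 1 ≤ (l.sqrt + 1) ^ 2 := Nat.lt_succ_sqrt' l
    have : (l.sqrt + 1) ^ 2 ≤ (2 * J) ^ 2 := Nat.pow_le_pow_left (by omega) 2
    exact_mod_cast (by omega : l + 1 ≤ (2 * J) ^ 2)
  have hpk : 1 / 4 ≤ passageProb 1 k * (N : ℝ) ^ 3 :=
    one_div_four_le_one_mul_cube N.cast_nonneg (by exact_mod_cast hk)
  have hpl : 1 / 4 ≤ passageProb 1 l * (2 * J) ^ 3 :=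
    one_div_four_le_one_mul_cube (by positivity) hlJ
  calc 1 / (2400 * (N : ℝ) ^ 3)
      ≤ 4 / 75 * (J : ℝ) ^ 3 * (passageProb 1 k * passageProb 1 l) := by
        rw [div_le_iff₀ (by positivity)]
        nlinarith [mul_le_mul hpk hpl (by norm_num) (by linarith)]
    _ ≤ ∑ j ∈ Finset.range J, passageProb (j + 1) k * passageProb (j + 1) l :=
        cube_div_le_sum_mul (fun j hj => (hJl j hj).trans hlk) hJl
    _ ≤ ∑ j ∈ Finset.range (J + 1), passageProb j k * passageProb j l := by
        rw [Finset.sum_range_succ']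
        exact le_add_of_nonneg_right (mul_nonneg (nonneg _ _) (nonneg _ _))
    _ ≤ ∑ j ∈ Finset.range N, passageProb j k * passageProb j l :=
        Finset.sum_le_sum_of_subset_of_nonneg (Finset.range_subset_range.2 hJN)
          fun j _ _ => mul_nonneg (nonneg _ _) (nonneg _ _)

theorem le_sum_mul {N k l : ℕ} (hN : N ≠ 0) (hk : k < N ^ 2) (hl : l < N ^ 2) :
    1 / (2400 * (N : ℝ) ^ 3) ≤ ∑ j ∈ Finset.range N, passageProb j k * passageProb j l := by
  obtain rfl | hN : N = 1 ∨ 2 ≤ N := by omega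
  · obtain ⟨rfl, rfl⟩ : k = 0 ∧ l = 0 := by omega
    norm_num [zero_right]
  · rcases le_total l k with h | h
    · exact le_sum_mul_of_le hN hk h
    · simpa only [mul_comm] using le_sum_mul_of_le hN hl h

end passageProb

section OrderedBanachAlgebra

variable {𝔸 : Type*} [NormedRing 𝔸] [NormedAlgebra ℝ 𝔸]

/-- The ergodic mean `(1 + a + ⋯ + a ^ (n - 1)) / n` of the powers of `a`; it is `0` for `n = 0`. -/
noncomputable def powMean (n : ℕ) (a : 𝔸) : 𝔸 :=
  (n : ℝ)⁻¹ • ∑ k ∈ Finset.range n, a ^ k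

/-- The multiparameter ergodic mean: the ordered product of the ergodic means of the `S i`. -/
noncomputable def multiMean {d : ℕ} (S : Fin d → 𝔸) (n : Fin d → ℕ) : 𝔸 :=
  (List.ofFn fun i => powMean (n i) (S i)).prod

/-- Brunel's transform `ψ(a)`, where `ψ(z) = (1 - √(1 - z)) / z` is the power series with
coefficients `passageProb 1 k`. -/
noncomputable def brunel (a : 𝔸) : 𝔸 :=
  ∑' k, passageProb 1 k • a ^ k

theorem powMean_zero (a : 𝔸) : powMean 0 a = 0 := by simp [powMean]

theorem powMean_one_right {n : ℕ} (hn : n ≠ 0) : powMean n (1 : 𝔸) = 1 := by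
  simp only [powMean, one_pow, Finset.sum_const, Finset.card_range]
  rw [← Nat.cast_smul_eq_nsmul ℝ, smul_smul, inv_mul_cancel₀ (by exact_mod_cast hn), one_smul]

theorem powMean_mul_one_sub (n : ℕ) (a : 𝔸) :
    powMean n a * (1 - a) = (n : ℝ)⁻¹ • (1 - a ^ n) := by
  rw [powMean, smul_mul_assoc, geom_sum_mul_neg]

theorem multiMean_succ {d : ℕ} (S : Fin (d + 1) → 𝔸) (n : Fin (d + 1) → ℕ) :
    multiMean S n = powMean (n 0) (S 0) * multiMean (Fin.tail S) (Fin.tail n) := by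
  rw [multiMean, List.ofFn_succ, List.prod_cons]; rfl

theorem multiMean_eq_zero {d : ℕ} (S : Fin d → 𝔸) {n : Fin d → ℕ} {i : Fin d} (hi : n i = 0) :
    multiMean S n = 0 :=
  List.prod_eq_zero <| List.mem_ofFn.2 ⟨i, by rw [hi, powMean_zero]⟩

theorem multiMean_eq_smul_sum {d : ℕ} (S : Fin d → 𝔸) (n : Fin d → ℕ) :
    multiMean S n = (∏ i, (n i : ℝ))⁻¹ • ∑ k ∈ Fintype.piFinset fun i => Finset.range (n i),
      (List.ofFn fun i => S i ^ k i).prod := by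
  induction d with
  | zero => simp [multiMean]
  | succ d ih =>
    have hprod : ∀ k, (List.ofFn fun i => S i ^ k i).prod =
        S 0 ^ k 0 * (List.ofFn fun i => Fin.tail S i ^ Fin.tail k i).prod := fun k => by
      rw [List.ofFn_succ, List.prod_cons]; rfl
    rw [multiMean_succ, ih, powMean, smul_mul_smul_comm, Fin.prod_univ_succ, mul_inv,
      Finset.sum_mul_sum, ← Finset.sum_product']
    congr 1
    refine Finset.sum_nbij' (fun x => Fin.cons x.1 x.2) (fun k => (k 0, Fin.tail k)) ?_ ?_ ?_ ?_ ?_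
    · simp [Fin.forall_fin_succ, Fin.tail]
    · simp [Fin.forall_fin_succ, Fin.tail]
    · simp
    · simp
    · intro x _
      rw [hprod, Fin.cons_zero, Fin.tail_cons]

section Convex

variable {D : Submonoid 𝔸} (hconv : Convex ℝ (D : Set 𝔸)) (hzero : 0 ∈ D)
include hconv hzero

theorem sum_smul_pow_mem_of_convex {a : 𝔸} (ha : a ∈ D) {w : ℕ → ℝ} (hw : ∀ k, 0 ≤ w k) {n : ℕ}
    (hw₁ : ∑ k ∈ Finset.range n, w k ≤ 1) : ∑ k ∈ Finset.range n, w k • a ^ k ∈ D := by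
  have hmem := hconv.sum_mem (t := (Finset.range n).insertNone)
    (w := fun o => o.elim (1 - ∑ k ∈ Finset.range n, w k) w) (z := fun o => o.elim 0 (a ^ ·))
    ?_ ?_ ?_
  · simpa [Finset.sum_insertNone] using hmem
  · rintro (_ | k) _
    exacts [sub_nonneg.2 hw₁, hw k]
  · simp [Finset.sum_insertNone]
  · rintro (_ | k) _
    exacts [hzero, pow_mem ha k]

theorem powMean_mem_of_convex {a : 𝔸} (ha : a ∈ D) (n : ℕ) : powMean n a ∈ D := by
  rw [powMean, Finset.smul_sum]
  refine sum_smul_pow_mem_of_convex hconv hzero ha (w := fun _ => (n : ℝ)⁻¹)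
    (fun _ => by positivity) ?_
  simpa using mul_inv_le_one

theorem multiMean_mem_of_convex {d : ℕ} {S : Fin d → 𝔸} (hS : ∀ i, S i ∈ D) (n : Fin d → ℕ) :
    multiMean S n ∈ D :=
  Submonoid.list_prod_mem _ fun _ hx => by
    obtain ⟨i, rfl⟩ := List.mem_ofFn.1 hx
    exact powMean_mem_of_convex hconv hzero (hS i) _

end Convex

/-- A closed convex commutative monoid of positive contractions, containing `0`. Ergodic means and
Brunel's transform operate within it. -/
structure IsPosContractionMonoid [PartialOrder 𝔸] (D : Submonoid 𝔸) : Prop where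
  isClosed : IsClosed (D : Set 𝔸)
  convex : Convex ℝ (D : Set 𝔸)
  zero_mem : 0 ∈ D
  nonneg : ∀ a ∈ D, 0 ≤ a
  norm_le_one : ∀ a ∈ D, ‖a‖ ≤ 1
  commute : ∀ a ∈ D, ∀ b ∈ D, Commute a b

namespace IsPosContractionMonoid

variable [PartialOrder 𝔸] {D : Submonoid 𝔸} (hD : IsPosContractionMonoid D) {a b : 𝔸}
include hD

theorem powMean_mem (ha : a ∈ D) (n : ℕ) : powMean n a ∈ D :=
  powMean_mem_of_convex hD.convex hD.zero_mem ha n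

theorem multiMean_mem {d : ℕ} {S : Fin d → 𝔸} (hS : ∀ i, S i ∈ D) (n : Fin d → ℕ) :
    multiMean S n ∈ D :=
  multiMean_mem_of_convex hD.convex hD.zero_mem hS n

theorem exists_multiMean_mul_one_sub_eq {d : ℕ} {S : Fin d → 𝔸} (hS : ∀ i, S i ∈ D)
    (n : Fin d → ℕ) (i : Fin d) :
    ∃ b ∈ D, multiMean S n * (1 - S i) = (n i : ℝ)⁻¹ • (b * (1 - S i ^ n i)) := by
  have hmem : ∀ x ∈ List.ofFn fun i => powMean (n i) (S i), x ∈ D := fun _ hx => by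
    obtain ⟨j, rfl⟩ := List.mem_ofFn.1 hx
    exact hD.powMean_mem (hS j) _
  obtain ⟨l, r, hlr⟩ := List.append_of_mem (List.mem_ofFn.2 ⟨i, rfl⟩ :
    powMean (n i) (S i) ∈ List.ofFn fun i => powMean (n i) (S i))
  have hl : l.prod ∈ D := Submonoid.list_prod_mem _ fun x hx => hmem x (by simp [hlr, hx])
  have hr : r.prod ∈ D := Submonoid.list_prod_mem _ fun x hx => hmem x (by simp [hlr, hx])
  refine ⟨l.prod * r.prod, mul_mem hl hr, ?_⟩
  rw [multiMean, hlr, List.prod_append, List.prod_cons,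
    (hD.commute _ (hD.powMean_mem (hS i) _) _ hr).eq, ← mul_assoc, mul_assoc,
    powMean_mul_one_sub, mul_smul_comm]

theorem norm_pow_le_one (ha : a ∈ D) (k : ℕ) : ‖a ^ k‖ ≤ 1 :=
  hD.norm_le_one _ (pow_mem ha k)

theorem summable_norm_brunel (ha : a ∈ D) : Summable fun k => ‖passageProb 1 k • a ^ k‖ := by
  refine passageProb.summable_one.of_nonneg_of_le (fun _ => norm_nonneg _) fun k => ?_
  rw [norm_smul, Real.norm_of_nonneg (passageProb.nonneg 1 k)]
  exact mul_le_of_le_one_right (passageProb.nonneg 1 k) (hD.norm_pow_le_one ha k)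

theorem powMean_sq_mul_powMean_sq_le_sum [IsOrderedAddMonoid 𝔸] [IsOrderedModule ℝ 𝔸]
    (ha : a ∈ D) (hb : b ∈ D) {N : ℕ} (hN : N ≠ 0) :
    powMean (N ^ 2) a * powMean (N ^ 2) b ≤ (2400 / N : ℝ) • ∑ j ∈ Finset.range N,
      (∑ k ∈ Finset.range (N ^ 2), passageProb j k • a ^ k) *
        ∑ l ∈ Finset.range (N ^ 2), passageProb j l • b ^ l := by
  have : (0 : ℝ) < N := by positivity
  set s := Finset.range (N ^ 2)
  have hgreen : ∀ k ∈ s, ∀ l ∈ s, ((N : ℝ) ^ 4)⁻¹ • (a ^ k * b ^ l) ≤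
      (2400 / N : ℝ) • (∑ j ∈ Finset.range N, passageProb j k * passageProb j l) •
        (a ^ k * b ^ l) := fun k hk l hl => by
    rw [smul_smul]
    refine smul_le_smul_of_nonneg_right ?_
      (hD.nonneg _ (mul_mem (pow_mem ha k) (pow_mem hb l)))
    calc ((N : ℝ) ^ 4)⁻¹ = 2400 / N * (1 / (2400 * (N : ℝ) ^ 3)) := by field_simp
      _ ≤ 2400 / N * ∑ j ∈ Finset.range N, passageProb j k * passageProb j l := by
        gcongr
        exact passageProb.le_sum_mul hN (Finset.mem_range.1 hk) (Finset.mem_range.1 hl)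
  calc powMean (N ^ 2) a * powMean (N ^ 2) b
      = ∑ k ∈ s, ∑ l ∈ s, ((N : ℝ) ^ 4)⁻¹ • (a ^ k * b ^ l) := by
        have hN4 : ((N ^ 2 : ℕ) : ℝ)⁻¹ * ((N ^ 2 : ℕ) : ℝ)⁻¹ = ((N : ℝ) ^ 4)⁻¹ := by
          push_cast
          field_simp
        simp only [powMean, smul_mul_smul_comm, Finset.sum_mul_sum, Finset.smul_sum, hN4, s]
    _ ≤ ∑ k ∈ s, ∑ l ∈ s, (2400 / N : ℝ) •
          (∑ j ∈ Finset.range N, passageProb j k * passageProb j l) • (a ^ k * b ^ l) :=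
        Finset.sum_le_sum fun k hk => Finset.sum_le_sum fun l hl => hgreen k hk l hl
    _ = (2400 / N : ℝ) • ∑ j ∈ Finset.range N,
          (∑ k ∈ s, passageProb j k • a ^ k) * ∑ l ∈ s, passageProb j l • b ^ l := by
        simp only [← Finset.smul_sum, Finset.sum_mul_sum, Finset.sum_smul, smul_mul_smul_comm]
        rw [Finset.sum_comm (s := Finset.range N)]
        exact congrArg _ (Finset.sum_congr rfl fun k _ => Finset.sum_comm)

theorem powMean_le_smul_powMean [IsOrderedRing 𝔸] [IsOrderedModule ℝ 𝔸] (ha : a ∈ D)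
    {n N : ℕ} {K : ℝ} (hnN : n ≤ N) (hNK : N ≤ K * n) :
    powMean n a ≤ K • powMean N a := by
  have hpow : ∀ k, 0 ≤ a ^ k := fun k => hD.nonneg _ (pow_mem ha k)
  have hinv : (n : ℝ)⁻¹ ≤ K * (N : ℝ)⁻¹ := by
    rcases n.eq_zero_or_pos with rfl | hn
    · obtain rfl : N = 0 := by simpa using hNK
      simp
    · have hN : 0 < N := hn.trans_le hnN
      rw [← div_eq_mul_inv, inv_eq_one_div, div_le_div_iff₀ (by positivity) (by positivity)]
      linarith
  calc powMean n a ≤ (n : ℝ)⁻¹ • ∑ k ∈ Finset.range N, a ^ k :=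
        smul_le_smul_of_nonneg_left (Finset.sum_le_sum_of_subset_of_nonneg
          (Finset.range_subset_range.2 hnN) fun k _ _ => hpow k) (by positivity)
    _ ≤ (K * (N : ℝ)⁻¹) • ∑ k ∈ Finset.range N, a ^ k :=
        smul_le_smul_of_nonneg_right hinv (Finset.sum_nonneg fun k _ => hpow k)
    _ = K • powMean N a := mul_smul _ _ _

variable [CompleteSpace 𝔸]

theorem brunel_mem (ha : a ∈ D) : brunel a ∈ D :=
  hD.isClosed.mem_of_tendsto (hD.summable_norm_brunel ha).of_norm.hasSum.tendsto_sum_nat <|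
    .of_forall fun n =>
      sum_smul_pow_mem_of_convex hD.convex hD.zero_mem ha (passageProb.nonneg 1)
        (passageProb.sum_range_one_le_one n)

theorem brunel_eq (ha : a ∈ D) : brunel a = (1 / 2 : ℝ) • (1 + a * brunel a ^ 2) := by
  have hnorm := hD.summable_norm_brunel ha
  have hsq : a * brunel a ^ 2 = ∑' k, (2 : ℝ) • passageProb 1 (k + 1) • a ^ (k + 1) := by
    rw [sq, brunel, tsum_mul_tsum_eq_tsum_sum_antidiagonal_of_summable_norm hnorm hnorm,
      ← (summable_norm_sum_mul_antidiagonal_of_summable_norm hnorm hnorm).of_norm.tsum_mul_left]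
    congr 1 with k
    rw [passageProb.one_succ_eq_sum_antidiagonal, smul_smul, ← mul_assoc,
      (by norm_num : (2 : ℝ) * (1 / 2) = 1), one_mul, Finset.sum_smul, Finset.mul_sum]
    refine Finset.sum_congr rfl fun ij hij => ?_
    rw [smul_mul_smul_comm, ← pow_add, Finset.HasAntidiagonal.mem_antidiagonal.1 hij,
      mul_smul_comm, pow_succ' a k]
  have htail : brunel a = passageProb 1 0 • a ^ 0 + ∑' k, passageProb 1 (k + 1) • a ^ (k + 1) :=
    hnorm.of_norm.tsum_eq_zero_add
  rw [hsq, tsum_const_smul'', smul_add, smul_smul, htail, passageProb.zero_right]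
  norm_num

variable [IsOrderedRing 𝔸] [IsOrderedModule ℝ 𝔸]

theorem sum_passageProb_smul_pow_le (ha : a ∈ D) (n j : ℕ) :
    ∑ k ∈ Finset.range n, passageProb j k • a ^ k ≤ brunel a ^ j := by
  have hpos : 0 ≤ a := hD.nonneg a ha
  have hbrunel : ∀ j, (1 / 2 : ℝ) • (brunel a ^ j + a * brunel a ^ (j + 2)) = brunel a ^ (j + 1) :=
    fun j => by
      calc (1 / 2 : ℝ) • (brunel a ^ j + a * brunel a ^ (j + 2))
          = (1 / 2 : ℝ) • (1 + a * brunel a ^ 2) * brunel a ^ j := by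
            rw [smul_mul_assoc, add_mul, one_mul, mul_assoc, ← pow_add, add_comm 2 j]
        _ = brunel a ^ (j + 1) := by rw [← hD.brunel_eq ha, pow_succ']
  induction n generalizing j with
  | zero => simpa using pow_nonneg (hD.nonneg _ (hD.brunel_mem ha)) j
  | succ n ihn =>
    induction j with
    | zero =>
      rw [Finset.sum_range_succ']
      simp [passageProb.zero_succ, passageProb.zero_right]
    | succ j ihj =>
      have hsplit : ∑ k ∈ Finset.range (n + 1), passageProb (j + 1) k • a ^ k =
          (1 / 2 : ℝ) • (∑ k ∈ Finset.range (n + 1), passageProb j k • a ^ k +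
            a * ∑ k ∈ Finset.range n, passageProb (j + 2) k • a ^ k) := by
        rw [Finset.sum_range_succ', Finset.sum_range_succ', add_right_comm, smul_add, smul_smul,
          Finset.mul_sum, ← Finset.sum_add_distrib, Finset.smul_sum]
        congr 1
        · refine Finset.sum_congr rfl fun k _ => ?_
          rw [passageProb.succ_succ, mul_smul_comm, pow_succ' a k, ← add_smul, smul_smul]
        · rw [passageProb.zero_right, passageProb.zero_right, pow_succ']
      rw [hsplit, ← hbrunel]
      exact smul_le_smul_of_nonneg_left
        (add_le_add ihj (mul_le_mul_of_nonneg_left (ihn (j + 2)) hpos)) (by norm_num)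

/-- **Brunel's inequality**. It rests on the two walks driven by `a` and `b` meeting the diagonal
`{(j, j) | j < N}` of passage levels with probability of order at least `N ^ (-3)`. -/
theorem powMean_sq_mul_powMean_sq_le (ha : a ∈ D) (hb : b ∈ D) (N : ℕ) :
    powMean (N ^ 2) a * powMean (N ^ 2) b ≤
      (2400 : ℝ) • powMean N (brunel a * brunel b) := by
  rcases eq_or_ne N 0 with rfl | hN
  · simp [powMean_zero]
  have hnonneg : ∀ j, 0 ≤ ∑ l ∈ Finset.range (N ^ 2), passageProb j l • b ^ l := fun j =>
    Finset.sum_nonneg fun l _ => smul_nonneg (passageProb.nonneg j l) (hD.nonneg _ (pow_mem hb l))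
  refine (hD.powMean_sq_mul_powMean_sq_le_sum ha hb hN).trans ?_
  calc (2400 / N : ℝ) • ∑ j ∈ Finset.range N,
        (∑ k ∈ Finset.range (N ^ 2), passageProb j k • a ^ k) *
          ∑ l ∈ Finset.range (N ^ 2), passageProb j l • b ^ l
      ≤ (2400 / N : ℝ) • ∑ j ∈ Finset.range N, brunel a ^ j * brunel b ^ j := by
        refine smul_le_smul_of_nonneg_left (Finset.sum_le_sum fun j _ => ?_) (by positivity)
        exact mul_le_mul (hD.sum_passageProb_smul_pow_le ha _ j)
          (hD.sum_passageProb_smul_pow_le hb _ j) (hnonneg j)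
          (pow_nonneg (hD.nonneg _ (hD.brunel_mem ha)) j)
    _ = (2400 : ℝ) • powMean N (brunel a * brunel b) := by
        simp only [powMean, smul_smul, div_eq_mul_inv,
          (hD.commute _ (hD.brunel_mem ha) _ (hD.brunel_mem hb)).mul_pow]

theorem exists_powMean_pow_le (ha : a ∈ D) (m : ℕ) :
    ∃ u ∈ D, ∃ c : ℝ, 0 < c ∧ ∀ M ≠ 0, powMean (M ^ 2 ^ m) a ≤ c • powMean M u := by
  induction m with
  | zero => exact ⟨a, ha, 1, one_pos, fun M _ => by simp⟩
  | succ m ih =>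
    obtain ⟨u, hu, c, hc, hle⟩ := ih
    refine ⟨brunel u * brunel 1, mul_mem (hD.brunel_mem hu) (hD.brunel_mem (one_mem D)),
      c * 2400, by positivity, fun M hM => ?_⟩
    calc powMean (M ^ 2 ^ (m + 1)) a = powMean ((M ^ 2) ^ 2 ^ m) a := by
          rw [← pow_mul, pow_succ']
      _ ≤ c • powMean (M ^ 2) u := hle _ (pow_ne_zero 2 hM)
      _ = c • (powMean (M ^ 2) u * powMean (M ^ 2) 1) := by
          rw [powMean_one_right (pow_ne_zero 2 hM), mul_one]
      _ ≤ c • (2400 : ℝ) • powMean M (brunel u * brunel 1) :=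
          smul_le_smul_of_nonneg_left (hD.powMean_sq_mul_powMean_sq_le hu (one_mem D) M) hc.le
      _ = (c * 2400) • powMean M (brunel u * brunel 1) := smul_smul _ _ _

theorem exists_multiMean_le_of_comparable {d : ℕ} {S : Fin d → 𝔸} (hS : ∀ i, S i ∈ D) {K : ℝ}
    (hK : 0 < K) : ∃ u ∈ D, ∃ c : ℝ, 0 < c ∧ ∀ M ≠ 0, ∀ n : Fin d → ℕ,
      (∀ i, n i ≤ M ^ 2 ^ d ∧ (↑(M ^ 2 ^ d) : ℝ) ≤ K * n i) →
        multiMean S n ≤ c • powMean M u := by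
  induction d with
  | zero =>
    refine ⟨1, one_mem D, 1, one_pos, fun M hM n _ => ?_⟩
    simp [multiMean, powMean_one_right hM]
  | succ d ih =>
    obtain ⟨v, hv, c, hc, hle⟩ := ih fun i => hS i.succ
    obtain ⟨u, hu, c', hc', hle'⟩ := hD.exists_powMean_pow_le (hS 0) d
    refine ⟨brunel u * brunel v, mul_mem (hD.brunel_mem hu) (hD.brunel_mem hv),
      K * c' * c * 2400, by positivity, fun M hM n hn => ?_⟩
    have hM2 : M ^ 2 ≠ 0 := pow_ne_zero 2 hM
    rw [pow_succ' 2 d, pow_mul] at hn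
    have hhead : powMean (n 0) (S 0) ≤ (K * c') • powMean (M ^ 2) u := by
      refine (hD.powMean_le_smul_powMean (hS 0) (hn 0).1 (hn 0).2).trans ?_
      rw [mul_smul]
      exact smul_le_smul_of_nonneg_left (hle' _ hM2) hK.le
    have htail : multiMean (Fin.tail S) (Fin.tail n) ≤ c • powMean (M ^ 2) v :=
      hle _ hM2 _ fun i => hn i.succ
    calc multiMean S n = powMean (n 0) (S 0) * multiMean (Fin.tail S) (Fin.tail n) :=
          multiMean_succ S n
      _ ≤ (K * c') • powMean (M ^ 2) u * c • powMean (M ^ 2) v :=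
          mul_le_mul hhead htail (hD.nonneg _ (hD.multiMean_mem (fun i => hS i.succ) _))
            (smul_nonneg (by positivity) (hD.nonneg _ (hD.powMean_mem hu _)))
      _ = (K * c' * c) • (powMean (M ^ 2) u * powMean (M ^ 2) v) := smul_mul_smul_comm _ _ _ _
      _ ≤ (K * c' * c) • (2400 : ℝ) • powMean M (brunel u * brunel v) :=
          smul_le_smul_of_nonneg_left (hD.powMean_sq_mul_powMean_sq_le hu hv M) (by positivity)
      _ = (K * c' * c * 2400) • powMean M (brunel u * brunel v) := smul_smul _ _ _

end IsPosContractionMonoid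

theorem exists_le_pow_le_two_pow_mul {q : ℕ} (hq : q ≠ 0) (m : ℕ) :
    ∃ M ≠ 0, m ≤ M ^ q ∧ (m ≠ 0 → M ^ q ≤ 2 ^ q * m) := by
  refine ⟨Nat.nthRoot q m + 1, Nat.succ_ne_zero _, (Nat.lt_pow_nthRoot_add_one hq m).le,
    fun hm => ?_⟩
  have hroot : 1 ≤ Nat.nthRoot q m := by
    rw [Nat.le_nthRoot_iff hq, one_pow]
    exact Nat.one_le_iff_ne_zero.2 hm
  calc (Nat.nthRoot q m + 1) ^ q ≤ (2 * Nat.nthRoot q m) ^ q := by gcongr; omega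
    _ = 2 ^ q * Nat.nthRoot q m ^ q := mul_pow _ _ _
    _ ≤ 2 ^ q * m := by gcongr; exact Nat.pow_nthRoot_le_iff.2 (.inl hq)

theorem InSector.exists_pow_comparable {d : ℕ} {n : ℕ → Fin d → ℕ} (hn : InSector n) {q : ℕ}
    (hq : q ≠ 0) : ∃ K : ℝ, 0 < K ∧ ∀ k, (∀ i, n k i ≠ 0) →
      ∃ M ≠ 0, ∀ i, n k i ≤ M ^ q ∧ (↑(M ^ q) : ℝ) ≤ K * n k i := by
  obtain ⟨c₀, hc₀⟩ := hn
  set c : ℝ := max c₀ 1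
  refine ⟨2 ^ q * ((d + 1) * c), by positivity, fun k hk => ?_⟩
  obtain ⟨M, hM, hle, hge⟩ := exists_le_pow_le_two_pow_mul hq (∑ i, n k i)
  refine ⟨M, hM, fun i => ?_⟩
  have hi : n k i ≤ ∑ i, n k i :=
    Finset.single_le_sum (fun _ _ => Nat.zero_le _) (Finset.mem_univ i)
  refine ⟨hi.trans hle, ?_⟩
  have hMq : (M : ℝ) ^ q ≤ 2 ^ q * ∑ i, (n k i : ℝ) := by
    exact_mod_cast hge fun h => hk i (Nat.le_zero.1 (h ▸ hi))
  have hsum : ∑ j, (n k j : ℝ) ≤ (d + 1) * c * n k i :=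
    calc ∑ j, (n k j : ℝ) ≤ ∑ _j : Fin d, c * n k i := by
          refine Finset.sum_le_sum fun j _ => ?_
          rw [← div_le_iff₀ (by have := hk i; positivity)]
          exact (hc₀ k j i (hk i)).trans (le_max_left _ _)
      _ ≤ (d + 1) * c * n k i := by
          rw [Finset.sum_const, Finset.card_univ, Fintype.card_fin, nsmul_eq_mul, mul_assoc]
          gcongr; linarith
  calc (↑(M ^ q) : ℝ) = (M : ℝ) ^ q := by push_cast; rfl
    _ ≤ 2 ^ q * ∑ i, (n k i : ℝ) := hMq
    _ ≤ 2 ^ q * ((d + 1) * c * n k i) := by gcongr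
    _ = 2 ^ q * ((d + 1) * c) * n k i := by ring

theorem IsPosContractionMonoid.exists_multiMean_le_of_inSector [PartialOrder 𝔸] [CompleteSpace 𝔸]
    [IsOrderedRing 𝔸] [IsOrderedModule ℝ 𝔸] {D : Submonoid 𝔸} (hD : IsPosContractionMonoid D)
    {d : ℕ} {S : Fin d → 𝔸} (hS : ∀ i, S i ∈ D) {n : ℕ → Fin d → ℕ} (hn : InSector n) :
    ∃ u ∈ D, ∃ c : ℝ, 0 < c ∧ ∀ k, ∃ M, multiMean S (n k) ≤ c • powMean M u := by
  obtain ⟨K, hK, hcomp⟩ := hn.exists_pow_comparable (pow_ne_zero d two_ne_zero)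
  obtain ⟨u, hu, c, hc, hle⟩ := hD.exists_multiMean_le_of_comparable hS hK
  refine ⟨u, hu, c, hc, fun k => ?_⟩
  by_cases hk : ∀ i, n k i ≠ 0
  · obtain ⟨M, hM, hM'⟩ := hcomp k hk
    exact ⟨M, hle M hM (n k) hM'⟩
  · obtain ⟨i, hi⟩ := not_forall_not.1 hk
    exact ⟨0, by rw [multiMean_eq_zero S hi, powMean_zero, smul_zero]⟩

end OrderedBanachAlgebra

section PositiveOperators

variable {E : Type*} [NormedAddCommGroup E] [NormedSpace ℝ E] [Lattice E] [IsOrderedAddMonoid E]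

/-- The order on the operators of a vector lattice whose positive cone consists of the positive
operators. It is only a local instance because on a Hilbert space it competes with the Loewner
order. -/
abbrev positiveOperatorOrder : PartialOrder (E →L[ℝ] E) where
  le A B := ∀ f, 0 ≤ f → A f ≤ B f
  le_refl _ _ _ := le_rfl
  le_trans _ _ _ hAB hBC f hf := (hAB f hf).trans (hBC f hf)
  le_antisymm A B hAB hBA := by
    have hpos : ∀ f, 0 ≤ f → A f = B f := fun f hf => (hAB f hf).antisymm (hBA f hf)
    ext f
    rw [← posPart_sub_negPart f, map_sub, map_sub, hpos _ (posPart_nonneg f),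
      hpos _ (negPart_nonneg f)]

attribute [local instance] positiveOperatorOrder

theorem operator_nonneg_iff {A : E →L[ℝ] E} : 0 ≤ A ↔ ∀ f, 0 ≤ f → 0 ≤ A f := Iff.rfl

instance instIsOrderedRingOperator : IsOrderedRing (E →L[ℝ] E) :=
  have : IsOrderedAddMonoid (E →L[ℝ] E) :=
    { add_le_add_left := fun _ _ h C f hf => add_le_add_left (h f hf) (C f) }
  have : ZeroLEOneClass (E →L[ℝ] E) := ⟨fun _ hf => hf⟩
  .of_mul_nonneg fun _ _ hA hB f hf => hA _ (hB f hf)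

instance instIsOrderedModuleOperator [IsOrderedModule ℝ E] : IsOrderedModule ℝ (E →L[ℝ] E) :=
  .of_smul_nonneg fun _ hc _ hA f hf => smul_nonneg hc (hA f hf)

theorem operator_apply_mono {A : E →L[ℝ] E} (hA : 0 ≤ A) : Monotone A := fun f g hfg => by
  rw [← sub_nonneg, ← map_sub]
  exact hA _ (sub_nonneg.2 hfg)

theorem abs_operator_apply_le {A : E →L[ℝ] E} (hA : 0 ≤ A) (f : E) : |A f| ≤ A |f| :=
  abs_le'.2 ⟨operator_apply_mono hA (le_abs_self f), by
    rw [← map_neg]; exact operator_apply_mono hA (neg_le_abs f)⟩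

end PositiveOperators

attribute [local instance] positiveOperatorOrder

section DunfordSchwartz

variable {μ : Measure Ω} {p : ℝ≥0∞}

instance instIsOrderedModuleLp : IsOrderedModule ℝ (Lp ℝ p μ) :=
  .of_smul_nonneg fun c hc f hf => by
    rw [← Lp.coeFn_nonneg] at hf ⊢
    filter_upwards [hf, Lp.coeFn_smul c f] with ω hω hcω
    rw [hcω]
    exact mul_nonneg hc hω

/-- The elements of `L^p` with `L^∞`-norm at most `c`. -/
def linftyBall (μ : Measure Ω) (p : ℝ≥0∞) (c : ℝ) : Set (Lp ℝ p μ) :=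
  {f | ∀ᵐ ω ∂μ, |f ω| ≤ c}

theorem convex_linftyBall (c : ℝ) : Convex ℝ (linftyBall μ p c) := by
  intro f hf g hg a b ha hb hab
  filter_upwards [hf, hg, Lp.coeFn_add (a • f) (b • g), Lp.coeFn_smul a f, Lp.coeFn_smul b g]
    with ω hfω hgω hadd hsmulf hsmulg
  simp only [hadd, Pi.add_apply, hsmulf, hsmulg, Pi.smul_apply]
  exact abs_le.2 (convex_Icc (-c) c (abs_le.1 hfω) (abs_le.1 hgω) ha hb hab)

theorem indicatorConstLp_mem_linftyBall {s : Set Ω} (hs : MeasurableSet s)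
    (hμs : μ s ≠ ∞) (c : ℝ) : indicatorConstLp p hs hμs c ∈ linftyBall μ p |c| := by
  filter_upwards [indicatorConstLp_coeFn (p := p) (hs := hs) (hμs := hμs) (c := c)] with ω hω
  rw [hω, ← Real.norm_eq_abs]
  exact norm_indicator_le_norm_self (fun _ => c) ω

theorem isClosed_linftyBall [Fact (1 ≤ p)] (c : ℝ) : IsClosed (linftyBall μ p c) :=
  IsSeqClosed.isClosed fun u f hu hf => by
    obtain ⟨ns, -, hlim⟩ := (tendstoInMeasure_of_tendsto_Lp hf).exists_seq_tendsto_ae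
    filter_upwards [hlim, ae_all_iff.2 fun i => hu (ns i)] with ω hω huω
    exact le_of_tendsto' hω.abs huω

variable [Fact (1 ≤ p)]

/-- The Dunford–Schwartz operators on `L^p`: positive contractions which also contract the
`L^∞`-norm. -/
def dsOps (μ : Measure Ω) (p : ℝ≥0∞) [Fact (1 ≤ p)] : Submonoid (Lp ℝ p μ →L[ℝ] Lp ℝ p μ) where
  carrier := {A | 0 ≤ A ∧ ‖A‖ ≤ 1 ∧ ∀ c, MapsTo A (linftyBall μ p c) (linftyBall μ p c)}
  one_mem' := ⟨zero_le_one, ContinuousLinearMap.norm_id_le, fun _ _ hf => hf⟩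
  mul_mem' := fun ⟨hA, hA₁, hA'⟩ ⟨hB, hB₁, hB'⟩ =>
    ⟨mul_nonneg hA hB, (norm_mul_le _ _).trans (mul_le_one₀ hA₁ (norm_nonneg _) hB₁),
      fun c => (hA' c).comp (hB' c)⟩

theorem zero_mem_dsOps : 0 ∈ dsOps μ p :=
  ⟨le_rfl, by simp, fun c f hf => by
    filter_upwards [hf, Lp.coeFn_zero ℝ p μ] with ω hω h0
    rw [zero_apply, h0, Pi.zero_apply, abs_zero]
    exact (abs_nonneg _).trans hω⟩

theorem convex_dsOps : Convex ℝ (dsOps μ p : Set (Lp ℝ p μ →L[ℝ] Lp ℝ p μ)) := by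
  rintro A ⟨hA, hA₁, hA'⟩ B ⟨hB, hB₁, hB'⟩ a b ha hb hab
  refine ⟨add_nonneg (smul_nonneg ha hA) (smul_nonneg hb hB), ?_, fun c f hf =>
    convex_linftyBall c (hA' c hf) (hB' c hf) ha hb hab⟩
  simpa using convex_closedBall (0 : Lp ℝ p μ →L[ℝ] Lp ℝ p μ) 1 (by simpa using hA₁)
    (by simpa using hB₁) ha hb hab

theorem isClosed_dsOps : IsClosed (dsOps μ p : Set (Lp ℝ p μ →L[ℝ] Lp ℝ p μ)) := by
  have hcont : ∀ f : Lp ℝ p μ, Continuous fun A : Lp ℝ p μ →L[ℝ] Lp ℝ p μ => A f :=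
    fun f => (ContinuousLinearMap.apply ℝ _ f).continuous
  have hpos : IsClosed {A : Lp ℝ p μ →L[ℝ] Lp ℝ p μ | 0 ≤ A} := by
    simp only [operator_nonneg_iff, ofPred_forall]
    exact isClosed_iInter fun f => isClosed_iInter fun _ => isClosed_le continuous_const (hcont f)
  have hmaps : IsClosed {A : Lp ℝ p μ →L[ℝ] Lp ℝ p μ |
      ∀ c, MapsTo A (linftyBall μ p c) (linftyBall μ p c)} := by
    simp only [MapsTo, ofPred_forall]
    exact isClosed_iInter fun c => isClosed_iInter fun f => isClosed_iInter fun _ =>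
      (isClosed_linftyBall c).preimage (hcont f)
  exact hpos.inter ((isClosed_le continuous_norm continuous_const).inter hmaps)

/-- The operators in `dsOps μ p` lying in the bicommutant of `s`; when the elements of `s` commute
this is a commutative monoid. -/
noncomputable def dsBicommutant (s : Set (Lp ℝ p μ →L[ℝ] Lp ℝ p μ)) :
    Submonoid (Lp ℝ p μ →L[ℝ] Lp ℝ p μ) :=
  dsOps μ p ⊓ (Subalgebra.centralizer ℝ s.centralizer).toSubmonoid

theorem subset_dsBicommutant {s : Set (Lp ℝ p μ →L[ℝ] Lp ℝ p μ)} (hs : s ⊆ dsOps μ p) :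
    s ⊆ dsBicommutant s :=
  fun _ hA => ⟨hs hA, subset_centralizer_centralizer hA⟩

theorem isPosContractionMonoid_dsBicommutant {s : Set (Lp ℝ p μ →L[ℝ] Lp ℝ p μ)}
    (hs : ∀ A ∈ s, ∀ B ∈ s, A * B = B * A) : IsPosContractionMonoid (dsBicommutant s) where
  isClosed := isClosed_dsOps.inter (isClosed_centralizer _)
  convex := convex_dsOps.inter
    (Subalgebra.toSubmodule (Subalgebra.centralizer ℝ s.centralizer)).convex
  zero_mem := ⟨zero_mem_dsOps, zero_mem (Subalgebra.centralizer ℝ s.centralizer)⟩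
  nonneg _ hA := hA.1.1
  norm_le_one _ hA := hA.1.2.1
  commute _ hA _ hB := Set.centralizer_centralizer_comm_of_comm hs _ hA.2 _ hB.2

end DunfordSchwartz

section MaximalInequality

variable {μ : Measure Ω} {U : Lp ℝ 1 μ →L[ℝ] Lp ℝ 1 μ}

/-- The nonnegative part `max 0 (max_{m ≤ n} (g + U g + ⋯ + U ^ (m - 1) g))` of the maximal partial
sum, replaced by a recursive majorant as in Garsia's proof of Hopf's maximal ergodic theorem. -/
noncomputable def garsia (U : Lp ℝ 1 μ →L[ℝ] Lp ℝ 1 μ) (g : Lp ℝ 1 μ) : ℕ → Lp ℝ 1 μ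
  | 0 => 0
  | n + 1 => (g + U (garsia U g n)) ⊔ 0

theorem garsia_nonneg (g : Lp ℝ 1 μ) : ∀ n, 0 ≤ garsia U g n
  | 0 => le_rfl
  | _ + 1 => le_sup_right

theorem garsia_mono (hU : 0 ≤ U) (g : Lp ℝ 1 μ) : Monotone (garsia U g) := by
  refine monotone_nat_of_le_succ fun n => ?_
  induction n with
  | zero => exact garsia_nonneg g 1
  | succ n ih => exact sup_le_sup_right (add_le_add_right (operator_apply_mono hU ih) g) 0

theorem sum_pow_apply_le_garsia (hU : 0 ≤ U) (g : Lp ℝ 1 μ) (n : ℕ) :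
    ∑ j ∈ Finset.range n, (U ^ j) g ≤ garsia U g n := by
  induction n with
  | zero => simp [garsia]
  | succ n ih =>
    calc ∑ j ∈ Finset.range (n + 1), (U ^ j) g
        = g + U (∑ j ∈ Finset.range n, (U ^ j) g) := by
          rw [Finset.sum_range_succ', map_sum, add_comm]
          simp [pow_succ']
      _ ≤ g + U (garsia U g n) := add_le_add_right (operator_apply_mono hU ih) g
      _ ≤ garsia U g (n + 1) := le_sup_left

theorem smul_powMean_apply_le_garsia (hU : 0 ≤ U) (g : Lp ℝ 1 μ) {m n : ℕ} (hmn : m ≤ n) :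
    (m : ℝ) • powMean m U g ≤ garsia U g n := by
  rcases eq_or_ne m 0 with rfl | hm
  · simpa using garsia_nonneg g n
  · have : (m : ℝ) • powMean m U g = ∑ j ∈ Finset.range m, (U ^ j) g := by
      rw [powMean, smul_apply, smul_inv_smul₀ (by exact_mod_cast hm), sum_apply]
    exact this ▸ (sum_pow_apply_le_garsia hU g m).trans (garsia_mono hU g hmn)

theorem integral_coeFn_eq_norm {f : Lp ℝ 1 μ} (hf : 0 ≤ f) : ∫ ω, f ω ∂μ = ‖f‖ := by
  rw [L1.norm_eq_integral_norm]
  refine integral_congr_ae ?_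
  filter_upwards [(Lp.coeFn_nonneg f).2 hf] with ω hω
  exact (Real.norm_of_nonneg hω).symm

/-- **Hopf's maximal ergodic theorem**. -/
theorem setIntegral_garsia_pos_nonneg (hU : 0 ≤ U) (hU₁ : ‖U‖ ≤ 1) (g : Lp ℝ 1 μ) (n : ℕ) :
    0 ≤ ∫ ω in {ω | 0 < garsia U g n ω}, g ω ∂μ := by
  set F := garsia U g n
  have hF : 0 ≤ F := garsia_nonneg g n
  have hUF : 0 ≤ U F := hU F hF
  have hmeas : MeasurableSet {ω | 0 < F ω} :=
    measurableSet_lt measurable_const (Lp.stronglyMeasurable F).measurable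
  have hle : F ≤ (g + U F) ⊔ 0 := garsia_mono hU g n.le_succ
  have hpt : ∀ᵐ ω ∂μ, F ω - U F ω ≤ {ω | 0 < F ω}.indicator g ω := by
    filter_upwards [(Lp.coeFn_le _ _).2 hle, (Lp.coeFn_nonneg _).2 hUF, Lp.coeFn_sup (g + U F) 0,
      Lp.coeFn_zero ℝ 1 μ, Lp.coeFn_add g (U F)] with ω hleω hUFω hsup hzero hadd
    rw [hsup, Pi.sup_apply, hadd, hzero, Pi.add_apply, Pi.zero_apply] at hleω
    simp only [Pi.zero_apply] at hUFω
    by_cases hω : 0 < F ω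
    · rw [indicator_of_mem (show ω ∈ {ω | 0 < F ω} from hω)]
      linarith [(le_sup_iff.1 hleω).resolve_right hω.not_ge]
    · rw [indicator_of_notMem (show ω ∉ {ω | 0 < F ω} from hω)]
      linarith
  have hint : ∀ f : Lp ℝ 1 μ, Integrable f μ := L1.integrable_coeFn
  calc 0 ≤ ‖F‖ - ‖U F‖ := by simpa using U.le_of_opNorm_le hU₁ F
    _ = ∫ ω, (F ω - U F ω) ∂μ := by
      rw [integral_sub (hint _) (hint _), integral_coeFn_eq_norm hF, integral_coeFn_eq_norm hUF]
    _ ≤ ∫ ω, {ω | 0 < F ω}.indicator g ω ∂μ :=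
      integral_mono_ae ((hint _).sub (hint _)) ((hint g).indicator hmeas) hpt
    _ = ∫ ω in {ω | 0 < F ω}, g ω ∂μ := integral_indicator hmeas

theorem ae_garsia_pos_of_lt_powMean (hU : U ∈ dsOps μ 1) (f : Lp ℝ 1 μ) {b : Lp ℝ 1 μ}
    (hb : b ∈ linftyBall μ 1 1) {r : ℝ} (hr : 0 < r) (n : ℕ) :
    ∀ᵐ ω ∂μ, ∀ m ≤ n, r < powMean m U f ω → 0 < garsia U (f - r • b) n ω := by
  refine ae_all_iff.2 fun m => ae_all_iff.2 fun hmn => ?_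
  have hball : powMean m U b ∈ linftyBall μ 1 1 :=
    (powMean_mem_of_convex convex_dsOps zero_mem_dsOps hU m).2.2 1 hb
  have hle : (m : ℝ) • (powMean m U f - r • powMean m U b) ≤ garsia U (f - r • b) n := by
    simpa using smul_powMean_apply_le_garsia hU.1 (f - r • b) hmn
  filter_upwards [(Lp.coeFn_le _ _).2 hle, hball,
    Lp.coeFn_smul (m : ℝ) (powMean m U f - r • powMean m U b),
    Lp.coeFn_sub (powMean m U f) (r • powMean m U b), Lp.coeFn_smul r (powMean m U b),
    Lp.coeFn_zero ℝ 1 μ] with ω hleω hballω hsmul hsub hsmul' hzero hrω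
  rcases m.eq_zero_or_pos with rfl | hm
  · rw [powMean_zero, zero_apply, hzero] at hrω
    exact absurd hrω hr.not_gt
  rw [hsmul, Pi.smul_apply, hsub, Pi.sub_apply, hsmul', Pi.smul_apply, smul_eq_mul,
    smul_eq_mul] at hleω
  have : r * powMean m U b ω ≤ r := mul_le_of_le_one_right hr.le (abs_le.1 hballω).2
  exact lt_of_lt_of_le (mul_pos (by positivity) (by linarith)) hleω

theorem mul_measureReal_le_norm (hU : U ∈ dsOps μ 1) (f : Lp ℝ 1 μ) {r : ℝ} (hr : 0 < r)
    {B : Set Ω} (hB : MeasurableSet B) (hμB : μ B ≠ ∞) {n : ℕ}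
    (hBn : ∀ ω ∈ B, ∃ m ≤ n, r < powMean m U f ω) : r * μ.real B ≤ ‖f‖ := by
  set b : Lp ℝ 1 μ := indicatorConstLp 1 hB hμB (1 : ℝ)
  have hball : b ∈ linftyBall μ 1 1 := by
    simpa only [abs_one] using indicatorConstLp_mem_linftyBall hB hμB 1
  set P : Set Ω := {ω | 0 < garsia U (f - r • b) n ω}
  have hBP : ∀ᵐ ω ∂μ, ω ∈ B → ω ∈ P := by
    filter_upwards [ae_garsia_pos_of_lt_powMean hU f hball hr n] with ω hω hωB
    obtain ⟨m, hmn, hrm⟩ := hBn ω hωB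
    exact hω m hmn hrm
  have hint : ∀ f : Lp ℝ 1 μ, IntegrableOn f P μ := fun f =>
    (L1.integrable_coeFn f).integrableOn
  have hbP : ∫ ω in P, b ω ∂μ = μ.real B := by
    have hP : MeasurableSet P :=
      measurableSet_lt measurable_const (Lp.stronglyMeasurable _).measurable
    rw [setIntegral_indicatorConstLp hP, smul_eq_mul, mul_one]
    refine measureReal_congr ?_
    filter_upwards [hBP] with ω hω
    exact propext (and_iff_left_of_imp hω)
  have hfP : ∫ ω in P, f ω ∂μ ≤ ‖f‖ := by
    rw [L1.norm_eq_integral_norm]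
    exact (integral_mono (hint f) (hint f).norm fun ω => le_abs_self (f ω)).trans
      (setIntegral_le_integral (L1.integrable_coeFn f).norm (ae_of_all _ fun _ => norm_nonneg _))
  have hsub : ∫ ω in P, (f - r • b) ω ∂μ = ∫ ω in P, f ω ∂μ - r * ∫ ω in P, b ω ∂μ := by
    rw [← integral_const_mul, ← integral_sub (hint f) ((hint b).const_mul r)]
    refine integral_congr_ae (ae_restrict_of_ae ?_)
    filter_upwards [Lp.coeFn_sub f (r • b), Lp.coeFn_smul r b] with ω h h'
    rw [h, Pi.sub_apply, h', Pi.smul_apply, smul_eq_mul]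
  have hopf : 0 ≤ ∫ ω in P, (f - r • b) ω ∂μ := setIntegral_garsia_pos_nonneg hU.1 hU.2.1 _ n
  rw [hsub, hbP] at hopf
  linarith

theorem measure_exists_lt_powMean_le (hU : U ∈ dsOps μ 1) (f : Lp ℝ 1 μ) {r : ℝ} (hr : 0 < r) :
    μ {ω | ∃ m, r < powMean m U f ω} ≤ ENNReal.ofReal (‖f‖ / r) := by
  set s : ℕ → Set Ω := fun m => {ω | r < powMean m U f ω}
  have hmeas : ∀ n, MeasurableSet (accumulate s n) := fun n =>
    .biUnion (to_countable _) fun m _ =>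
      measurableSet_lt measurable_const (Lp.stronglyMeasurable _).measurable
  have hfin : ∀ n, μ (accumulate s n) ≠ ∞ := fun n =>
    (measure_biUnion_lt_top (finite_Iic n)
      fun m _ => (L1.integrable_coeFn (powMean m U f)).measure_gt_lt_top hr).ne
  have hle : ∀ n, μ (accumulate s n) ≤ ENNReal.ofReal (‖f‖ / r) := fun n => by
    rw [ENNReal.le_ofReal_iff_toReal_le (hfin n) (by positivity), le_div_iff₀' hr]
    exact mul_measureReal_le_norm hU f hr (hmeas n) (hfin n) fun ω hω => mem_accumulate.1 hω
  rw [ofPred_exists, ← iUnion_accumulate, monotone_accumulate.measure_iUnion]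
  exact iSup_le hle

end MaximalInequality

section Interpolation

variable {μ : Measure Ω}

instance instIsOrderedAddMonoidAEEqFun : IsOrderedAddMonoid (Ω →ₘ[μ] ℝ) where
  add_le_add_left f g hfg h := by
    rw [← AEEqFun.coeFn_le] at hfg ⊢
    filter_upwards [hfg, AEEqFun.coeFn_add f h, AEEqFun.coeFn_add g h] with ω hω hfh hgh
    rw [hfh, hgh]
    exact add_le_add_left hω (h ω)

theorem memL1pLinf_iff_mem_sup {f : Ω →ₘ[μ] ℝ} :
    MemL1pLinf μ f ↔ f ∈ Lp.LpSubmodule ℝ ℝ 1 μ ⊔ Lp.LpSubmodule ℝ ℝ ⊤ μ := by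
  simp only [MemL1pLinf, Submodule.mem_sup, ← lt_top_iff_ne_top, ← Lp.mem_Lp_iff_eLpNorm_lt_top]
  exact ⟨fun ⟨g, h, hg, hh, hf⟩ => ⟨g, hg, h, hh, hf.symm⟩,
    fun ⟨g, hg, h, hh, hf⟩ => ⟨g, h, hg, hh, hf.symm⟩⟩

theorem MemL1pLinf.add {f g : Ω →ₘ[μ] ℝ} (hf : MemL1pLinf μ f) (hg : MemL1pLinf μ g) :
    MemL1pLinf μ (f + g) :=
  memL1pLinf_iff_mem_sup.2 (add_mem (memL1pLinf_iff_mem_sup.1 hf) (memL1pLinf_iff_mem_sup.1 hg))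

theorem MemL1pLinf.const_smul {f : Ω →ₘ[μ] ℝ} (hf : MemL1pLinf μ f) (c : ℝ) :
    MemL1pLinf μ (c • f) :=
  memL1pLinf_iff_mem_sup.2 (Submodule.smul_mem _ c (memL1pLinf_iff_mem_sup.1 hf))

theorem memL1pLinf_coe_one (f : Lp ℝ 1 μ) : MemL1pLinf μ f.1 :=
  memL1pLinf_iff_mem_sup.2 (Submodule.mem_sup_left f.2)

theorem memL1pLinf_of_ae_abs_le {f : Ω →ₘ[μ] ℝ} {c : ℝ} (hf : ∀ᵐ ω ∂μ, |f ω| ≤ c) :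
    MemL1pLinf μ f :=
  memL1pLinf_iff_mem_sup.2 <| Submodule.mem_sup_right <|
    Lp.mem_Lp_iff_memLp.2 (memLp_top_of_bound f.aestronglyMeasurable c hf)

theorem norm_sq_eq_integral_sq (f : Lp ℝ 2 μ) : ‖f‖ ^ 2 = ∫ ω, f ω ^ 2 ∂μ := by
  rw [← real_inner_self_eq_norm_sq, L2.inner_def]
  simp only [real_inner_self_eq_norm_sq, Real.norm_eq_abs, sq_abs]

theorem eLpNorm_mul_self (f : Ω →ₘ[μ] ℝ) :
    eLpNorm (f * f : Ω →ₘ[μ] ℝ) 1 μ = eLpNorm f 2 μ ^ 2 := by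
  have hsq : (f * f : Ω →ₘ[μ] ℝ) =ᵐ[μ] fun ω => ‖f ω‖ ^ (2 : ℝ) := by
    filter_upwards [AEEqFun.coeFn_mul f f] with ω hω
    rw [hω, Pi.mul_apply, Real.rpow_two, Real.norm_eq_abs, sq_abs, sq]
  rw [eLpNorm_congr_ae hsq, eLpNorm_norm_rpow _ two_pos, one_mul, ENNReal.ofReal_ofNat,
    ENNReal.rpow_two]

theorem exists_eq_add_bounded_add_integrable (f : Lp ℝ 2 μ) {c : ℝ} (hc : 0 < c) :
    ∃ g ∈ linftyBall μ 2 c, ∃ h : Lp ℝ 2 μ, ∃ h' : Lp ℝ 1 μ,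
      f = g + h ∧ h'.1 = h.1 ∧ c * ‖h'‖ ≤ ‖f‖ ^ 2 := by
  set s : Set Ω := {ω | c < |f ω|}
  have hs : MeasurableSet s :=
    measurableSet_lt measurable_const (Lp.stronglyMeasurable f).measurable.abs
  have hf : MemLp f 2 μ := Lp.memLp f
  have hsq : Integrable (fun ω => f ω ^ 2) μ := hf.integrable_sq
  have hle : ∀ ω, c * ‖s.indicator f ω‖ ≤ f ω ^ 2 := fun ω => by
    by_cases hω : ω ∈ s
    · rw [indicator_of_mem hω, ← sq_abs, sq]
      exact mul_le_mul_of_nonneg_right (le_of_lt hω) (abs_nonneg _)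
    · rw [indicator_of_notMem hω, norm_zero, mul_zero]
      positivity
  have hint : Integrable (s.indicator f) μ :=
    (hsq.const_mul c⁻¹).mono' (hf.1.indicator hs) (ae_of_all _ fun ω =>
      (le_inv_mul_iff₀ hc).2 (hle ω))
  refine ⟨(hf.indicator hs.compl).toLp, ?_, (hf.indicator hs).toLp, hint.toL1, ?_, rfl, ?_⟩
  · filter_upwards [(hf.indicator hs.compl).coeFn_toLp] with ω hω
    rw [hω]
    by_cases hωs : ω ∈ s
    · simpa [hωs] using hc.le
    · rw [indicator_of_mem hωs]
      exact not_lt.1 hωs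
  · rw [← MemLp.toLp_add, Lp.ext_iff]
    filter_upwards [((hf.indicator hs.compl).add (hf.indicator hs)).coeFn_toLp] with ω hω
    rw [hω, indicator_compl_add_self]
  · rw [norm_sq_eq_integral_sq, L1.norm_of_fun_eq_integral_norm, ← integral_const_mul]
    exact integral_mono (hint.norm.const_mul c) hsq hle

theorem memL1pLinf_coe_two (f : Lp ℝ 2 μ) : MemL1pLinf μ f.1 := by
  obtain ⟨g, hg, h, h', rfl, hh', -⟩ := exists_eq_add_bounded_add_integrable f one_pos
  exact (memL1pLinf_of_ae_abs_le hg).add (hh' ▸ memL1pLinf_coe_one h')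

namespace IsPosDS

variable {T : (Ω →ₘ[μ] ℝ) → (Ω →ₘ[μ] ℝ)}

theorem ae_abs_apply_le (hT : IsPosDS μ T) {f : Ω →ₘ[μ] ℝ} {c : ℝ}
    (hf : ∀ᵐ ω ∂μ, |f ω| ≤ c) : ∀ᵐ ω ∂μ, |T f ω| ≤ c := by
  have hnorm : eLpNormEssSup (T f) μ ≤ ENNReal.ofReal c :=
    (hT.norm_top f (memL1pLinf_of_ae_abs_le hf)).trans (eLpNormEssSup_le_of_ae_bound hf)
  filter_upwards [ae_le_eLpNormEssSup (f := T f), hf] with ω hω hfω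
  rw [← ENNReal.ofReal_le_ofReal_iff ((abs_nonneg _).trans hfω), ← Real.enorm_eq_ofReal_abs]
  exact hω.trans hnorm

theorem apply_mono (hT : IsPosDS μ T) {f g : Ω →ₘ[μ] ℝ} (hf : MemL1pLinf μ f)
    (hg : MemL1pLinf μ g) (hfg : f ≤ g) : T f ≤ T g := by
  have hpos : 0 ≤ T (g + (-1 : ℝ) • f) :=
    hT.map_pos _ (hg.add (hf.const_smul _)) (by
      rwa [neg_one_smul, ← sub_eq_add_neg, sub_nonneg])
  rwa [hT.map_add _ _ hg (hf.const_smul _), hT.map_smul _ _ hf, neg_one_smul, ← sub_eq_add_neg,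
    sub_nonneg] at hpos

/-- The **Kadison–Schwarz inequality**, obtained by applying `T` to `2 q f ≤ f² + q²` for all
rational `q` and optimising over `q`. -/
theorem ae_sq_apply_le (hT : IsPosDS μ T) {f : Ω →ₘ[μ] ℝ} (hf : MemL1pLinf μ f)
    (hff : MemL1pLinf μ (f * f)) : ∀ᵐ ω ∂μ, T f ω ^ 2 ≤ T (f * f) ω := by
  have hone : ∀ᵐ ω ∂μ, |(1 : Ω →ₘ[μ] ℝ) ω| ≤ 1 := by
    filter_upwards [AEEqFun.coeFn_one (μ := μ) (α := Ω) (β := ℝ)] with ω hω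
    simp [hω]
  have hone' : MemL1pLinf μ (1 : Ω →ₘ[μ] ℝ) := memL1pLinf_of_ae_abs_le hone
  have hrat : ∀ q : ℚ, ∀ᵐ ω ∂μ, 2 * q * T f ω ≤ T (f * f) ω + q ^ 2 := fun q => by
    have hle : (2 * q : ℝ) • f ≤ f * f + (q ^ 2 : ℝ) • 1 := by
      rw [← AEEqFun.coeFn_le]
      filter_upwards [AEEqFun.coeFn_smul (2 * q : ℝ) f, AEEqFun.coeFn_mul f f,
        AEEqFun.coeFn_add (f * f) ((q ^ 2 : ℝ) • 1), AEEqFun.coeFn_smul (q ^ 2 : ℝ) (1 : Ω →ₘ[μ] ℝ),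
        AEEqFun.coeFn_one (μ := μ) (α := Ω) (β := ℝ)] with ω h₁ h₂ h₃ h₄ h₅
      simp only [h₁, h₂, h₃, h₄, h₅, Pi.add_apply, Pi.mul_apply, Pi.smul_apply, Pi.one_apply,
        smul_eq_mul]
      linarith [sq_nonneg (f ω - q)]
    have := hT.apply_mono (hf.const_smul _) (hff.add (hone'.const_smul _)) hle
    rw [hT.map_add _ _ hff (hone'.const_smul _), hT.map_smul _ _ hf, hT.map_smul _ _ hone',
      ← AEEqFun.coeFn_le] at this
    filter_upwards [this, hT.ae_abs_apply_le hone, AEEqFun.coeFn_smul (2 * q : ℝ) (T f),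
      AEEqFun.coeFn_add (T (f * f)) ((q ^ 2 : ℝ) • T 1), AEEqFun.coeFn_smul (q ^ 2 : ℝ) (T 1)]
      with ω hω h₁ h₂ h₃ h₄
    simp only [h₂, h₃, h₄, Pi.add_apply, Pi.smul_apply, smul_eq_mul] at hω
    exact hω.trans (add_le_add_right (mul_le_of_le_one_right (sq_nonneg _) (abs_le.1 h₁).2) _)
  filter_upwards [ae_all_iff.2 hrat] with ω hω
  have hreal : ∀ t : ℝ, 2 * t * T f ω ≤ T (f * f) ω + t ^ 2 := fun t =>
    Rat.denseRange_cast.induction_on (p := fun t : ℝ => 2 * t * T f ω ≤ T (f * f) ω + t ^ 2) t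
      (isClosed_le (by fun_prop) (by fun_prop)) hω
  linarith [hreal (T f ω)]

theorem eLpNorm_two_apply_le (hT : IsPosDS μ T) (f : Lp ℝ 2 μ) :
    eLpNorm (T f.1) 2 μ ≤ eLpNorm f.1 2 μ := by
  have hff : eLpNorm (f.1 * f.1 : Ω →ₘ[μ] ℝ) 1 μ < ∞ := by
    rw [eLpNorm_mul_self]
    exact ENNReal.pow_lt_top (Lp.eLpNorm_lt_top f)
  have hff' : MemL1pLinf μ (f.1 * f.1) := memL1pLinf_coe_one ⟨_, hff⟩
  refine (ENNReal.pow_le_pow_left_iff two_ne_zero).1 ?_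
  calc eLpNorm (T f.1) 2 μ ^ 2 = eLpNorm (T f.1 * T f.1 : Ω →ₘ[μ] ℝ) 1 μ :=
        (eLpNorm_mul_self _).symm
    _ ≤ eLpNorm (T (f.1 * f.1)) 1 μ := by
      refine eLpNorm_mono_ae ?_
      filter_upwards [hT.ae_sq_apply_le (memL1pLinf_coe_two f) hff',
        AEEqFun.coeFn_mul (T f.1) (T f.1)] with ω hω hmul
      rw [hmul, Pi.mul_apply, ← sq, norm_pow, Real.norm_eq_abs, sq_abs]
      exact hω.trans (le_abs_self _)
    _ ≤ eLpNorm (f.1 * f.1 : Ω →ₘ[μ] ℝ) 1 μ := hT.norm_one _ hff'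
    _ = eLpNorm f.1 2 μ ^ 2 := eLpNorm_mul_self _

theorem exists_mem_dsOps (hT : IsPosDS μ T) {p : ℝ≥0∞} [Fact (1 ≤ p)]
    (hmem : ∀ f : Lp ℝ p μ, MemL1pLinf μ f.1)
    (hnorm : ∀ f : Lp ℝ p μ, eLpNorm (T f.1) p μ ≤ eLpNorm f.1 p μ) :
    ∃ S ∈ dsOps μ p, ∀ f, (S f).1 = T f.1 := by
  let S₀ : Lp ℝ p μ →ₗ[ℝ] Lp ℝ p μ :=
    { toFun := fun f => ⟨T f.1, (hnorm f).trans_lt (Lp.eLpNorm_lt_top f)⟩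
      map_add' := fun f g => Subtype.ext (hT.map_add _ _ (hmem f) (hmem g))
      map_smul' := fun c f => Subtype.ext (hT.map_smul c _ (hmem f)) }
  have hS₀ : ∀ f, ‖S₀ f‖ ≤ 1 * ‖f‖ := fun f => by
    rw [one_mul, Lp.norm_def, Lp.norm_def]
    exact ENNReal.toReal_mono (Lp.eLpNorm_ne_top f) (hnorm f)
  exact ⟨S₀.mkContinuous 1 hS₀, ⟨fun f hf => hT.map_pos _ (hmem f) hf,
    S₀.mkContinuous_norm_le zero_le_one hS₀, fun c f hf => hT.ae_abs_apply_le hf⟩, fun _ => rfl⟩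

theorem exists_mem_dsOps_one (hT : IsPosDS μ T) : ∃ S ∈ dsOps μ 1, ∀ f, (S f).1 = T f.1 :=
  hT.exists_mem_dsOps memL1pLinf_coe_one fun f => hT.norm_one _ (memL1pLinf_coe_one f)

theorem exists_mem_dsOps_two (hT : IsPosDS μ T) : ∃ S ∈ dsOps μ 2, ∀ f, (S f).1 = T f.1 :=
  hT.exists_mem_dsOps memL1pLinf_coe_two hT.eLpNorm_two_apply_le

end IsPosDS

section Realization

variable {p : ℝ≥0∞} [Fact (1 ≤ p)] {d : ℕ} {T : Fin d → (Ω →ₘ[μ] ℝ) → (Ω →ₘ[μ] ℝ)}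
  {S : Fin d → Lp ℝ p μ →L[ℝ] Lp ℝ p μ}

theorem coe_prod_pow_apply (hST : ∀ i f, (S i f).1 = T i f.1) (k : Fin d → ℕ) (f : Lp ℝ p μ) :
    ((List.ofFn fun i => S i ^ k i).prod f).1 = iterComp T k f.1 := by
  induction d with
  | zero => simp [iterComp]
  | succ d ih =>
    have hsemi : Function.Semiconj Subtype.val (S 0) (T 0) := hST 0
    have htail := ih (T := fun i => T i.succ) (fun i => hST i.succ) fun i => k i.succ
    simp only [iterComp, List.ofFn_succ, List.foldr_cons, List.prod_cons, Function.comp_apply]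
      at htail ⊢
    rw [← htail, mul_apply_eq_comp, FunLike.coe_pow_eq_iterate]
    exact hsemi.iterate_right (k 0) _

theorem coe_multiMean_apply (hST : ∀ i f, (S i f).1 = T i f.1) (n : Fin d → ℕ) (f : Lp ℝ p μ) :
    (multiMean S n f).1 = multiAvg μ T n f.1 := by
  rw [multiMean_eq_smul_sum, multiAvg, smul_apply, sum_apply]
  refine congrArg ((∏ i, (n i : ℝ))⁻¹ • ·) ?_
  rw [AddSubgroup.val_finsetSum]
  exact Finset.sum_congr rfl fun k _ => coe_prod_pow_apply hST k f

end Realization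

end Interpolation

section AlmostUniform

variable {μ : Measure Ω} {F G : ℕ → Ω → ℝ}

theorem ofReal_add_le_ofReal {a b c : ℝ} (ha : 0 ≤ a) (hb : 0 ≤ b) (habc : a + b ≤ c) :
    ENNReal.ofReal a + ENNReal.ofReal b ≤ ENNReal.ofReal c := by
  rw [← ENNReal.ofReal_add ha hb]
  exact ENNReal.ofReal_le_ofReal habc

/-- A sequence of functions is almost uniformly Cauchy when its tails oscillate by more than `ε`
only on a set of measure at most `ε`. -/
def AuCauchy (μ : Measure Ω) (F : ℕ → Ω → ℝ) : Prop :=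
  ∀ ε > 0, ∃ K, μ {ω | ∃ k ≥ K, ∃ l ≥ K, ε < |F k ω - F l ω|} ≤ ENNReal.ofReal ε

namespace AuCauchy

theorem congr (hF : AuCauchy μ F) (hFG : ∀ k, F k =ᵐ[μ] G k) : AuCauchy μ G := fun ε hε => by
  obtain ⟨K, hK⟩ := hF ε hε
  refine ⟨K, le_of_eq_of_le (measure_congr (eventuallyEq_set.2 ?_)) hK⟩
  filter_upwards [ae_all_iff.2 hFG] with ω hω
  simp only [hω]

theorem add (hF : AuCauchy μ F) (hG : AuCauchy μ G) : AuCauchy μ (F + G) := fun ε hε => by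
  obtain ⟨K, hK⟩ := hF (ε / 2) (half_pos hε)
  obtain ⟨L, hL⟩ := hG (ε / 2) (half_pos hε)
  refine ⟨max K L, (measure_mono ?_).trans <| (measure_union_le _ _).trans <|
    (add_le_add hK hL).trans (ofReal_add_le_ofReal (by positivity) (by positivity) (by linarith))⟩
  rintro ω ⟨k, hk, l, hl, hkl⟩
  by_contra! hω
  simp only [mem_union, mem_ofPred_eq, not_or, not_exists, not_and, not_lt] at hω
  have hFω := hω.1 k (le_of_max_le_left hk) l (le_of_max_le_left hl)
  have hGω := hω.2 k (le_of_max_le_right hk) l (le_of_max_le_right hl)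
  have := abs_add_le (F k ω - F l ω) (G k ω - G l ω)
  rw [Pi.add_apply, Pi.add_apply, Pi.add_apply, Pi.add_apply, add_sub_add_comm] at hkl
  linarith

theorem const_smul (hF : AuCauchy μ F) (c : ℝ) : AuCauchy μ (c • F) := fun ε hε => by
  have hc : 0 < |c| + 1 := by positivity
  obtain ⟨K, hK⟩ := hF (ε / (|c| + 1)) (by positivity)
  refine ⟨K, (measure_mono ?_).trans (hK.trans (ENNReal.ofReal_le_ofReal
    (div_le_self hε.le (by linarith [abs_nonneg c]))))⟩
  rintro ω ⟨k, hk, l, hl, hkl⟩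
  refine ⟨k, hk, l, hl, (div_lt_iff₀ hc).2 (hkl.trans_le ?_)⟩
  simp only [Pi.smul_apply, smul_eq_mul, ← mul_sub, abs_mul]
  rw [mul_comm]
  exact mul_le_mul_of_nonneg_left (by linarith) (abs_nonneg _)

theorem of_eventually_ae_abs_sub_le (g : Ω → ℝ)
    (hF : ∀ ε > 0, ∀ᶠ k in atTop, ∀ᵐ ω ∂μ, |F k ω - g ω| ≤ ε) : AuCauchy μ F := fun ε hε => by
  obtain ⟨K, hK⟩ := eventually_atTop.1 (hF (ε / 2) (half_pos hε))
  refine ⟨K, le_of_eq_of_le (measure_eq_zero_iff_ae_notMem.2 ?_) zero_le⟩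
  filter_upwards [ae_all_iff.2 fun k => ae_all_iff.2 (hK k)] with ω hω
  rintro ⟨k, hk, l, hl, hkl⟩
  have hk' := abs_le.1 (hω k hk)
  have hl' := abs_le.1 (hω l hl)
  exact hkl.not_ge (abs_le.2 ⟨by linarith, by linarith⟩)

theorem exists_uniformCauchySeqOn (hF : AuCauchy μ F) {ε : ℝ} (hε : 0 < ε) :
    ∃ E, MeasurableSet E ∧ μ Eᶜ ≤ ENNReal.ofReal ε ∧ UniformCauchySeqOn F atTop E := by
  have hpos : ∀ t : ℕ, 0 < ε / 2 / 2 ^ t := fun t => by positivity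
  choose K hK using fun t : ℕ => hF (ε / 2 / 2 ^ t) (hpos t)
  set bad : Set Ω := ⋃ t, {ω | ∃ k ≥ K t, ∃ l ≥ K t, ε / 2 / 2 ^ t < |F k ω - F l ω|}
  have hbad : μ bad ≤ ENNReal.ofReal ε :=
    calc μ bad ≤ ∑' t, ENNReal.ofReal (ε / 2 / 2 ^ t) :=
          (measure_iUnion_le _).trans (ENNReal.tsum_le_tsum hK)
      _ = ENNReal.ofReal ε := by
          rw [← ENNReal.ofReal_tsum_of_nonneg (fun t => (hpos t).le) (summable_geometric_two' ε),
            tsum_geometric_two' ε]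
  refine ⟨(toMeasurable μ bad)ᶜ, (measurableSet_toMeasurable _ _).compl, by
    rwa [compl_compl, measure_toMeasurable], Metric.uniformCauchySeqOn_iff.2 fun δ hδ => ?_⟩
  obtain ⟨t, ht⟩ := exists_pow_lt_of_lt_one (div_pos hδ (half_pos hε)) one_half_lt_one
  refine ⟨K t, fun k hk l hl ω hω => ?_⟩
  have hωt : ω ∉ bad := fun h => hω (subset_toMeasurable μ bad h)
  simp only [bad, mem_iUnion, mem_ofPred_eq, not_exists, not_and, not_lt] at hωt
  refine (hωt t k hk l hl).trans_lt ?_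
  rw [lt_div_iff₀ (half_pos hε), one_div, inv_pow] at ht
  rwa [div_eq_inv_mul (ε / 2)]

theorem ae_exists_tendsto (hF : AuCauchy μ F) : ∀ᵐ ω ∂μ, ∃ x, Tendsto (F · ω) atTop (𝓝 x) := by
  rw [ae_iff]
  refine le_antisymm (ENNReal.le_of_forall_pos_le_add fun ε hε _ => ?_) zero_le
  obtain ⟨E, -, hμE, hE⟩ := hF.exists_uniformCauchySeqOn (NNReal.coe_pos.2 hε)
  rw [zero_add, ← ENNReal.ofReal_coe_nnreal]
  refine (measure_mono ?_).trans hμE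
  exact fun ω hω hωE => hω (cauchySeq_tendsto_of_complete (hE.cauchySeq hωE))

theorem exists_tendstoUniformlyOn (hF : AuCauchy μ F) {g : Ω → ℝ}
    (hg : ∀ᵐ ω ∂μ, Tendsto (F · ω) atTop (𝓝 (g ω))) {ε : ℝ} (hε : 0 < ε) :
    ∃ E, MeasurableSet E ∧ μ Eᶜ ≤ ENNReal.ofReal ε ∧ TendstoUniformlyOn F g atTop E := by
  obtain ⟨E, hEm, hμE, hE⟩ := hF.exists_uniformCauchySeqOn hε
  obtain ⟨N, hN, hNm, hμN⟩ := exists_measurable_superset_of_null (ae_iff.1 hg)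
  refine ⟨E \ N, hEm.diff hNm, ?_, (hE.mono sdiff_subset).tendstoUniformlyOn_of_tendsto
    fun ω hω => not_not.1 fun h => hω.2 (hN h)⟩
  rw [sdiff_eq, compl_inter, compl_compl]
  exact (measure_union_le _ _).trans (by rwa [hμN, add_zero])

end AuCauchy

theorem auTendsto_of_tendstoUniformlyOn {ι : Type*} {l : Filter ι} {F : ι → Ω →ₘ[μ] ℝ}
    {g : Ω →ₘ[μ] ℝ} (h : ∀ ε : ℝ, 0 < ε → ∃ E, MeasurableSet E ∧ μ Eᶜ ≤ ENNReal.ofReal ε ∧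
      TendstoUniformlyOn (fun i => ⇑(F i)) g l E) : AuTendsto μ l F g := fun ε hε => by
  obtain ⟨E, hEm, hμE, hE⟩ := h ε hε
  refine ⟨E, hEm, hμE, ENNReal.tendsto_nhds_zero.2 fun δ hδ => ?_⟩
  obtain ⟨r, hr, hrδ⟩ := ENNReal.lt_iff_exists_nnreal_btwn.1 hδ
  filter_upwards [Metric.tendstoUniformlyOn_iff.1 hE r (by exact_mod_cast hr)] with i hi
  refine (eLpNormEssSup_le_of_ae_bound (C := r) ?_).trans (by simpa using hrδ.le)
  filter_upwards [AEEqFun.coeFn_sub (F i) g] with ω hω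
  by_cases hωE : ω ∈ E
  · rw [indicator_of_mem hωE, hω, Pi.sub_apply, ← dist_eq_norm, dist_comm]
    exact (hi ω hωE).le
  · simp [hωE]

theorem AuCauchy.exists_auTendsto {p : ℝ≥0∞} [Fact (1 ≤ p)] {F : ℕ → Lp ℝ p μ}
    (hF : AuCauchy μ fun k => F k) {C : ℝ} (hC : ∀ k, ‖F k‖ ≤ C) :
    ∃ g : Lp ℝ p μ, AuTendsto μ atTop (fun k => (F k).1) g := by
  obtain ⟨g, hg, hlim⟩ := exists_stronglyMeasurable_limit_of_tendsto_ae
    (fun k => Lp.aestronglyMeasurable (F k)) hF.ae_exists_tendsto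
  have hgp : MemLp g p μ := by
    refine ⟨hg.aestronglyMeasurable, ?_⟩
    calc eLpNorm g p μ ≤ liminf (fun k => eLpNorm (F k) p μ) atTop :=
          Lp.eLpNorm_lim_le_liminf_eLpNorm (fun k => Lp.aestronglyMeasurable (F k)) g hlim
      _ ≤ ENNReal.ofReal C := by
          refine liminf_le_of_le (by isBoundedDefault) fun b hb => ?_
          obtain ⟨k, hk⟩ := hb.exists
          rw [← Lp.enorm_def, ← ofReal_norm] at hk
          exact hk.trans (ENNReal.ofReal_le_ofReal (hC k))
      _ < ∞ := ofReal_lt_top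
  refine ⟨hgp.toLp, auTendsto_of_tendstoUniformlyOn fun ε hε =>
    hF.exists_tendstoUniformlyOn ?_ hε⟩
  filter_upwards [hlim, hgp.coeFn_toLp] with ω hω hgω
  exact hgω ▸ hω

end AlmostUniform

section BanachPrinciple

variable {μ : Measure Ω} {p : ℝ≥0∞} [Fact (1 ≤ p)] {Φ : ℕ → Lp ℝ p μ →L[ℝ] Lp ℝ p μ}

/-- A sequence of operators on `L^p` is equicontinuous in measure at `0` when
its maximal function `sup_k |Φ k f|` tends to `0` in measure as `f → 0`. -/
def IsMaxEquicontinuous (Φ : ℕ → Lp ℝ p μ →L[ℝ] Lp ℝ p μ) : Prop :=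
  ∀ ε > 0, ∃ ρ > 0, ∀ f, ‖f‖ < ρ → μ {ω | ∃ k, ε < |Φ k f ω|} ≤ ENNReal.ofReal ε

/-- The `f ∈ L^p` for which the sequence `Φ k f` is almost uniformly Cauchy. -/
def auCauchySubmodule (Φ : ℕ → Lp ℝ p μ →L[ℝ] Lp ℝ p μ) : Submodule ℝ (Lp ℝ p μ) where
  carrier := {f | AuCauchy μ fun k => Φ k f}
  add_mem' {f g} hf hg := (hf.add hg).congr fun k => by
    rw [map_add]; exact (Lp.coeFn_add (Φ k f) (Φ k g)).symm
  zero_mem' := .of_eventually_ae_abs_sub_le (0 : Lp ℝ p μ) fun ε hε =>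
    .of_forall fun k => .of_forall fun ω => by simpa using hε.le
  smul_mem' c f hf := (hf.const_smul c).congr fun k => by
    rw [map_smul]; exact (Lp.coeFn_smul c (Φ k f)).symm

/-- **Banach's principle**. -/
theorem isClosed_auCauchySubmodule (hΦ : IsMaxEquicontinuous Φ) :
    IsClosed (auCauchySubmodule Φ : Set (Lp ℝ p μ)) := by
  refine isClosed_of_closure_subset fun f hf ε hε => ?_
  obtain ⟨ρ, hρ, hmax⟩ := hΦ (ε / 3) (by positivity)
  obtain ⟨g, hg, hfg⟩ := Metric.mem_closure_iff.1 hf ρ hρ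
  obtain ⟨K, hK⟩ := hg (ε / 3) (by positivity)
  rw [dist_eq_norm] at hfg
  have hsub : ∀ k, Φ k (f - g) =ᵐ[μ] ⇑(Φ k f) - ⇑(Φ k g) := fun k => by
    rw [map_sub]; exact Lp.coeFn_sub _ _
  suffices hle : ∀ᵐ ω ∂μ, ω ∈ {ω | ∃ k ≥ K, ∃ l ≥ K, ε < |Φ k f ω - Φ l f ω|} →
      ω ∈ {ω | ∃ k, ε / 3 < |Φ k (f - g) ω|} ∪
        {ω | ∃ k ≥ K, ∃ l ≥ K, ε / 3 < |Φ k g ω - Φ l g ω|} from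
    ⟨K, (measure_mono_ae hle).trans <| (measure_union_le _ _).trans <|
      (add_le_add (hmax _ hfg) hK).trans
        (ofReal_add_le_ofReal (by positivity) (by positivity) (by linarith))⟩
  filter_upwards [ae_all_iff.2 hsub] with ω hω
  rintro ⟨k, hk, l, hl, hkl⟩
  by_contra! hnot
  simp only [mem_union, mem_ofPred_eq, not_or, not_exists, not_and, not_lt, hω, Pi.sub_apply]
    at hnot
  have hk' := abs_le.1 (hnot.1 k)
  have hl' := abs_le.1 (hnot.1 l)
  have hg' := abs_le.1 (hnot.2 k hk l hl)
  exact hkl.not_ge (abs_le.2 ⟨by linarith, by linarith⟩)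

end BanachPrinciple

section DenseClass

theorem powMean_apply_eq_self {E : Type*} [NormedAddCommGroup E] [NormedSpace ℝ E]
    {A : E →L[ℝ] E} {f : E} (hf : A f = f) {n : ℕ} (hn : n ≠ 0) : powMean n A f = f := by
  have hpow : ∀ k, (A ^ k) f = f := fun k => by
    rw [FunLike.coe_pow_eq_iterate]
    exact Function.IsFixedPt.iterate hf k
  simp only [powMean, smul_apply, sum_apply, hpow, Finset.sum_const, Finset.card_range]
  rw [← Nat.cast_smul_eq_nsmul ℝ, inv_smul_smul₀ (by exact_mod_cast hn)]

theorem multiMean_apply_eq_self {E : Type*} [NormedAddCommGroup E] [NormedSpace ℝ E] {d : ℕ}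
    {S : Fin d → E →L[ℝ] E} {f : E} (hf : ∀ i, S i f = f) {n : Fin d → ℕ} (hn : ∀ i, n i ≠ 0) :
    multiMean S n f = f :=
  List.prod_induction (fun A : E →L[ℝ] E => A f = f)
    (fun A B hA hB => by rw [mul_apply_eq_comp, hB, hA]) rfl fun A hA => by
      obtain ⟨i, rfl⟩ := List.mem_ofFn.1 hA
      exact powMean_apply_eq_self (hf i) (hn i)

theorem apply_eq_self_of_inner_sub_eq_zero {H : Type*} [NormedAddCommGroup H]
    [InnerProductSpace ℝ H] {A : H →L[ℝ] H} (hA : ‖A‖ ≤ 1) {f : H}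
    (hf : inner ℝ (f - A f) f = 0) : A f = f := by
  rw [inner_sub_left, real_inner_self_eq_norm_sq, sub_eq_zero] at hf
  have hle : ‖A f‖ ^ 2 ≤ ‖f‖ ^ 2 := by
    gcongr
    exact (A.le_of_opNorm_le hA f).trans_eq (one_mul _)
  have hsq : ‖A f - f‖ ^ 2 ≤ 0 := by
    rw [norm_sub_sq_real]
    linarith
  have hzero : ‖A f - f‖ = 0 := (pow_eq_zero_iff two_ne_zero).1 (hsq.antisymm (sq_nonneg _))
  exact sub_eq_zero.1 (norm_eq_zero.1 hzero)

theorem eq_top_of_coboundary_mem_of_fixed_mem {H : Type*} [NormedAddCommGroup H]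
    [InnerProductSpace ℝ H] [CompleteSpace H] {ι : Type*} {S : ι → H →L[ℝ] H}
    (hS : ∀ i, ‖S i‖ ≤ 1) {V : Submodule ℝ H} (hV : IsClosed (V : Set H))
    (hcob : ∀ i f, f - S i f ∈ V) (hfix : ∀ f, (∀ i, S i f = f) → f ∈ V) : V = ⊤ := by
  have : CompleteSpace V := hV.completeSpace_coe
  rw [← Submodule.orthogonal_eq_bot_iff, Submodule.eq_bot_iff]
  intro f hf
  rw [Submodule.mem_orthogonal] at hf
  exact inner_self_eq_zero.1 (hf f (hfix f fun i =>
    apply_eq_self_of_inner_sub_eq_zero (hS i) (hf _ (hcob i f))))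

theorem eq_top_of_indicatorConstLp_mem {μ : Measure Ω} {p : ℝ≥0∞} [Fact (1 ≤ p)] (hp : p ≠ ∞)
    {V : Submodule ℝ (Lp ℝ p μ)} (hV : IsClosed (V : Set (Lp ℝ p μ)))
    (hind : ∀ (c : ℝ) (s : Set Ω) (hs : MeasurableSet s) (hμs : μ s ≠ ∞),
      indicatorConstLp p hs hμs c ∈ V) : V = ⊤ :=
  Submodule.eq_top_iff'.2 <| Lp.induction hp (motive := (· ∈ V))
    (fun c s hs hμs => by
      rw [Lp.simpleFunc.coe_indicatorConst]
      exact hind c s hs hμs.ne)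
    (fun _ _ _ _ _ hf hg => V.add_mem hf hg) hV

end DenseClass

section Averages

variable {μ : Measure Ω} {d : ℕ} {n : ℕ → Fin d → ℕ}

theorem isMaxEquicontinuous_multiMean_one {S : Fin d → Lp ℝ 1 μ →L[ℝ] Lp ℝ 1 μ}
    (hS : ∀ i, S i ∈ dsOps μ 1) (hcomm : ∀ i j, S i * S j = S j * S i) (hn : InSector n) :
    IsMaxEquicontinuous fun k => multiMean S (n k) := by
  have hD : IsPosContractionMonoid (dsBicommutant (range S)) :=
    isPosContractionMonoid_dsBicommutant <|
      forall_mem_range.2 fun i => forall_mem_range.2 (hcomm i)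
  have hSD : ∀ i, S i ∈ dsBicommutant (range S) := fun i =>
    subset_dsBicommutant (range_subset_iff.2 hS) (mem_range_self i)
  obtain ⟨u, hu, c, hc, hle⟩ := hD.exists_multiMean_le_of_inSector hSD hn
  refine fun ε hε => ⟨ε ^ 2 / c, by positivity, fun f hf => ?_⟩
  choose M hM using hle
  have hdom : ∀ k, |multiMean S (n k) f| ≤ c • powMean (M k) u |f| := fun k =>
    (abs_operator_apply_le (hD.nonneg _ (hD.multiMean_mem hSD _)) f).trans
      (hM k _ (abs_nonneg f))
  have hsub : ∀ᵐ ω ∂μ, ω ∈ {ω | ∃ k, ε < |multiMean S (n k) f ω|} →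
      ω ∈ {ω | ∃ m, ε / c < powMean m u |f| ω} := by
    filter_upwards [ae_all_iff.2 fun k => (Lp.coeFn_le _ _).2 (hdom k),
      ae_all_iff.2 fun k => Lp.coeFn_abs (multiMean S (n k) f),
      ae_all_iff.2 fun k => Lp.coeFn_smul c (powMean (M k) u |f|)] with ω hω habs hsmul
    rintro ⟨k, hk⟩
    refine ⟨M k, (div_lt_iff₀' hc).2 (hk.trans_le ?_)⟩
    rw [← habs k]
    exact (hω k).trans_eq (hsmul k)
  calc μ {ω | ∃ k, ε < |multiMean S (n k) f ω|}
      ≤ μ {ω | ∃ m, ε / c < powMean m u |f| ω} := measure_mono_ae hsub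
    _ ≤ ENNReal.ofReal (‖|f|‖ / (ε / c)) := measure_exists_lt_powMean_le hu.1 _ (by positivity)
    _ ≤ ENNReal.ofReal ε := ENNReal.ofReal_le_ofReal <| by
        rw [norm_abs_eq_norm, div_le_iff₀ (by positivity), ← mul_div_assoc, ← sq]
        exact hf.le

theorem IsMaxEquicontinuous.two_of_one {Φ : ℕ → Lp ℝ 1 μ →L[ℝ] Lp ℝ 1 μ}
    {Ψ : ℕ → Lp ℝ 2 μ →L[ℝ] Lp ℝ 2 μ} (hΦ : IsMaxEquicontinuous Φ)
    (hΨ : ∀ k c, MapsTo (Ψ k) (linftyBall μ 2 c) (linftyBall μ 2 c))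
    (hΦΨ : ∀ k f g, f.1 = g.1 → (Φ k f).1 = (Ψ k g).1) : IsMaxEquicontinuous Ψ := by
  intro ε hε
  obtain ⟨ρ, hρ, hmax⟩ := hΦ (ε / 2) (half_pos hε)
  refine ⟨√(ε / 2 * ρ), by positivity, fun f hf => ?_⟩
  obtain ⟨g, hg, h, h', rfl, hh', hnorm⟩ := exists_eq_add_bounded_add_integrable f (half_pos hε)
  have hρ' : ‖h'‖ < ρ :=
    lt_of_mul_lt_mul_left (hnorm.trans_lt ((Real.lt_sqrt (norm_nonneg _)).1 hf)) (half_pos hε).le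
  have hsub : ∀ᵐ ω ∂μ, ω ∈ {ω | ∃ k, ε < |Ψ k (g + h) ω|} →
      ω ∈ {ω | ∃ k, ε / 2 < |Φ k h' ω|} := by
    filter_upwards [ae_all_iff.2 fun k => hΨ k _ hg,
      ae_all_iff.2 fun k => Lp.coeFn_add (Ψ k g) (Ψ k h)] with ω hω hadd
    rintro ⟨k, hk⟩
    refine ⟨k, ?_⟩
    rw [map_add, hadd, Pi.add_apply] at hk
    rw [hΦΨ k h' h hh']
    linarith [abs_add_le (Ψ k g ω) (Ψ k h ω), hω k]
  exact (measure_mono_ae hsub).trans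
    ((hmax h' hρ').trans (ENNReal.ofReal_le_ofReal (half_le_self hε.le)))

section Coboundary

variable {p : ℝ≥0∞} [Fact (1 ≤ p)] {S : Fin d → Lp ℝ p μ →L[ℝ] Lp ℝ p μ}

theorem ae_abs_multiMean_coboundary_le (hS : ∀ i, S i ∈ dsOps μ p)
    (hcomm : ∀ i j, S i * S j = S j * S i) {c : ℝ} {f : Lp ℝ p μ} (hf : f ∈ linftyBall μ p c)
    (m : Fin d → ℕ) (i : Fin d) :
    ∀ᵐ ω ∂μ, |multiMean S m (f - S i f) ω| ≤ (m i : ℝ)⁻¹ * (2 * c) := by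
  have hD : IsPosContractionMonoid (dsBicommutant (range S)) :=
    isPosContractionMonoid_dsBicommutant <|
      forall_mem_range.2 fun i => forall_mem_range.2 (hcomm i)
  obtain ⟨B, hB, hBm⟩ := hD.exists_multiMean_mul_one_sub_eq
    (fun i => subset_dsBicommutant (range_subset_iff.2 hS) (mem_range_self i)) m i
  have htel : multiMean S m (f - S i f) = (m i : ℝ)⁻¹ • (B f - B ((S i ^ m i) f)) := by
    rw [← map_sub]
    exact DFunLike.congr_fun hBm f
  filter_upwards [hB.1.2.2 c hf, hB.1.2.2 c ((pow_mem (hS i) (m i)).2.2 c hf),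
    Lp.coeFn_smul (m i : ℝ)⁻¹ (B f - B ((S i ^ m i) f)),
    Lp.coeFn_sub (B f) (B ((S i ^ m i) f))] with ω hω₁ hω₂ hsmul hsub
  rw [htel, hsmul, Pi.smul_apply, hsub, Pi.sub_apply, smul_eq_mul, abs_mul, abs_inv, Nat.abs_cast]
  gcongr
  linarith [abs_sub (B f ω) (B ((S i ^ m i) f) ω)]

variable (hS : ∀ i, S i ∈ dsOps μ p) (hcomm : ∀ i j, S i * S j = S j * S i)
  (hn : ∀ i, Tendsto (fun k => n k i) atTop atTop)
include hS hcomm hn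

theorem coboundary_mem_auCauchySubmodule_of_mem_linftyBall {c : ℝ} {f : Lp ℝ p μ}
    (hf : f ∈ linftyBall μ p c) (i : Fin d) :
    f - S i f ∈ auCauchySubmodule fun k => multiMean S (n k) := by
  refine AuCauchy.of_eventually_ae_abs_sub_le 0 fun ε hε => ?_
  have hlim : Tendsto (fun k => (n k i : ℝ)⁻¹ * (2 * c)) atTop (𝓝 0) := by
    simpa using ((tendsto_inv_atTop_nhds_zero_nat (𝕜 := ℝ)).comp (hn i)).mul_const (2 * c)
  filter_upwards [hlim.eventually_le_const hε] with k hk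
  filter_upwards [ae_abs_multiMean_coboundary_le hS hcomm hf (n k) i] with ω hω
  rw [Pi.zero_apply, sub_zero]
  exact hω.trans hk

theorem coboundary_mem_auCauchySubmodule (hp : p ≠ ∞)
    (hmax : IsMaxEquicontinuous fun k => multiMean S (n k)) (i : Fin d) (f : Lp ℝ p μ) :
    f - S i f ∈ auCauchySubmodule fun k => multiMean S (n k) := by
  set V := (auCauchySubmodule fun k => multiMean S (n k)).comap (1 - S i).toLinearMap
  have hV : V = ⊤ := eq_top_of_indicatorConstLp_mem hp
    ((isClosed_auCauchySubmodule hmax).preimage (1 - S i).continuous) fun c s hs hμs =>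
      coboundary_mem_auCauchySubmodule_of_mem_linftyBall hS hcomm hn
        (indicatorConstLp_mem_linftyBall hs hμs c) i
  exact Submodule.eq_top_iff'.1 hV f

end Coboundary

theorem auCauchySubmodule_multiMean_two_eq_top {S : Fin d → Lp ℝ 2 μ →L[ℝ] Lp ℝ 2 μ}
    (hS : ∀ i, S i ∈ dsOps μ 2) (hcomm : ∀ i j, S i * S j = S j * S i)
    (hn : ∀ i, Tendsto (fun k => n k i) atTop atTop)
    (hmax : IsMaxEquicontinuous fun k => multiMean S (n k)) :
    auCauchySubmodule (fun k => multiMean S (n k)) = ⊤ := by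
  refine eq_top_of_coboundary_mem_of_fixed_mem (fun i => (hS i).2.1)
    (isClosed_auCauchySubmodule hmax)
    (coboundary_mem_auCauchySubmodule hS hcomm hn ofNat_ne_top hmax) fun f hf => ?_
  refine AuCauchy.of_eventually_ae_abs_sub_le f fun ε hε => ?_
  filter_upwards [eventually_all.2 fun i => (hn i).eventually_ne_atTop 0] with k hk
  rw [multiMean_apply_eq_self hf hk]
  exact .of_forall fun ω => by simpa using hε.le

theorem auCauchySubmodule_one_eq_top {Φ : ℕ → Lp ℝ 1 μ →L[ℝ] Lp ℝ 1 μ}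
    {Ψ : ℕ → Lp ℝ 2 μ →L[ℝ] Lp ℝ 2 μ} (hΦ : IsMaxEquicontinuous Φ)
    (hΨ : auCauchySubmodule Ψ = ⊤) (hΦΨ : ∀ k f g, f.1 = g.1 → (Φ k f).1 = (Ψ k g).1) :
    auCauchySubmodule Φ = ⊤ :=
  eq_top_of_indicatorConstLp_mem one_ne_top (isClosed_auCauchySubmodule hΦ) fun c s hs hμs => by
    have hmem : AuCauchy μ fun k => Ψ k (indicatorConstLp 2 hs hμs c) :=
      Submodule.eq_top_iff'.1 hΨ _
    refine hmem.congr fun k => ?_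
    rw [hΦΨ k (indicatorConstLp 1 hs hμs c) (indicatorConstLp 2 hs hμs c) rfl]

theorem auCauchySubmodule_multiMean_one_eq_top {S : Fin d → Lp ℝ 1 μ →L[ℝ] Lp ℝ 1 μ}
    {R : Fin d → Lp ℝ 2 μ →L[ℝ] Lp ℝ 2 μ} (hS : ∀ i, S i ∈ dsOps μ 1) (hR : ∀ i, R i ∈ dsOps μ 2)
    (hScomm : ∀ i j, S i * S j = S j * S i) (hRcomm : ∀ i j, R i * R j = R j * R i)
    (hSR : ∀ k f g, f.1 = g.1 → (multiMean S (n k) f).1 = (multiMean R (n k) g).1)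
    (hn : ∀ i, Tendsto (fun k => n k i) atTop atTop) (hsec : InSector n) :
    auCauchySubmodule (fun k => multiMean S (n k)) = ⊤ := by
  have hmaxS := isMaxEquicontinuous_multiMean_one hS hScomm hsec
  have hmaxR : IsMaxEquicontinuous fun k => multiMean R (n k) := hmaxS.two_of_one
    (fun k => (multiMean_mem_of_convex convex_dsOps zero_mem_dsOps hR (n k)).2.2) hSR
  exact auCauchySubmodule_one_eq_top hmaxS
    (auCauchySubmodule_multiMean_two_eq_top hR hRcomm hn hmaxR) hSR

end Averages

theorem mul_comm_of_coe_apply_eq {μ : Measure Ω} {p : ℝ≥0∞} [Fact (1 ≤ p)] {ι : Type*}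
    {T : ι → (Ω →ₘ[μ] ℝ) → (Ω →ₘ[μ] ℝ)}
    (hcomm : ∀ i j, ∀ f, MemL1pLinf μ f → T i (T j f) = T j (T i f))
    (hmem : ∀ f : Lp ℝ p μ, MemL1pLinf μ f.1) {S : ι → Lp ℝ p μ →L[ℝ] Lp ℝ p μ}
    (hST : ∀ i f, (S i f).1 = T i f.1) (i j : ι) : S i * S j = S j * S i :=
  ContinuousLinearMap.ext fun f => Subtype.ext <| by
    simp only [mul_apply_eq_comp, hST, hcomm i j _ (hmem f)]

theorem multiparam_sector_au_L1_general (μ : Measure Ω) {d : ℕ}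
    (T : Fin d → (Ω →ₘ[μ] ℝ) → (Ω →ₘ[μ] ℝ)) (hT : ∀ i, IsPosDS μ (T i))
    (hcomm : ∀ i j, ∀ f : Ω →ₘ[μ] ℝ, MemL1pLinf μ f → T i (T j f) = T j (T i f))
    (f : Ω →ₘ[μ] ℝ) (hf : eLpNorm f 1 μ ≠ ∞)
    (n : ℕ → Fin d → ℕ) (hn : ∀ i, Tendsto (fun k => n k i) atTop atTop)
    (hsec : InSector n) :
    ∃ fhat : Ω →ₘ[μ] ℝ, eLpNorm fhat 1 μ ≠ ∞ ∧
      AuTendsto μ atTop (fun k => multiAvg μ T (n k) f) fhat := by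
  choose S hS hST using fun i => (hT i).exists_mem_dsOps_one
  choose R hR hRT using fun i => (hT i).exists_mem_dsOps_two
  let f₁ : Lp ℝ 1 μ := ⟨f, hf.lt_top⟩
  have htop := auCauchySubmodule_multiMean_one_eq_top hS hR
    (mul_comm_of_coe_apply_eq hcomm memL1pLinf_coe_one hST)
    (mul_comm_of_coe_apply_eq hcomm memL1pLinf_coe_two hRT)
    (fun k g h hgh => by rw [coe_multiMean_apply hST, coe_multiMean_apply hRT, hgh]) hn hsec
  have hcauchy : AuCauchy μ fun k => multiMean S (n k) f₁ := Submodule.eq_top_iff'.1 htop f₁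
  have hbound : ∀ k, ‖multiMean S (n k) f₁‖ ≤ 1 * ‖f₁‖ := fun k =>
    ContinuousLinearMap.le_of_opNorm_le _
      (multiMean_mem_of_convex convex_dsOps zero_mem_dsOps hS (n k)).2.1 f₁
  obtain ⟨g, hg⟩ := hcauchy.exists_auTendsto hbound
  refine ⟨g, Lp.eLpNorm_ne_top g, ?_⟩
  simpa only [coe_multiMean_apply hST] using hg

/-- **Commutative case of Theorem 5.5**: for a commuting family of positive
Dunford–Schwartz operators `T₁,…,T_d` on a σ-finite measure space, `f ∈ L¹(μ)`,
and any sequence `n(k) → ∞` remaining in a sector of `ℕ^d`, the averages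
`A_{n(k)}(f)` converge almost uniformly to some `f̂ ∈ L¹(μ)`. -/
theorem multiparam_sector_au_L1 (μ : Measure Ω) [SigmaFinite μ] {d : ℕ}
    (T : Fin d → (Ω →ₘ[μ] ℝ) → (Ω →ₘ[μ] ℝ)) (hT : ∀ i, IsPosDS μ (T i))
    (hcomm : ∀ i j, ∀ f : Ω →ₘ[μ] ℝ, MemL1pLinf μ f → T i (T j f) = T j (T i f))
    (f : Ω →ₘ[μ] ℝ) (hf : eLpNorm f 1 μ ≠ ∞)
    (n : ℕ → Fin d → ℕ) (hn : ∀ i, Tendsto (fun k => n k i) atTop atTop)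
    (hsec : InSector n) :
    ∃ fhat : Ω →ₘ[μ] ℝ, eLpNorm fhat 1 μ ≠ ∞ ∧
      AuTendsto μ atTop (fun k => multiAvg μ T (n k) f) fhat :=
  multiparam_sector_au_L1_general μ T hT hcomm f hf n hn hsec
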